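/- Let n ≥ 3, γ > −min(2,n), α > 1 with α ≥ max(1, 1+γ/n), γ/(α−1) < s ≤ n, α ≤ q < ∞, r = ∞, and assume s/n + 1/q > 0, s/n + 1/q < 1 or (s/n + 1/q = 1 and r ≤ 1), and the scale-critical condition s/n + 1/q = 1/q_c < 1/Q_c. Let T > 0 and u₀ ∈ 𝒦̇^s_{q,∞}(ℝⁿ). If u₁, u₂ : [0,T] → 𝒦̇^s_{q,∞}(ℝⁿ) are mild solutions of the Hardy–Hénon equation on (0,T) with initial data u₀, with u₁(0) = u₂(0) = u₀ and with t ↦ u_i(t) continuous on [0,T] with respect to the Herz quasi-norm ‖·‖_{K̇^s_{q,∞}} for i = 1,2, then for every t ∈ [0,T], u₁(t) = u₂(t) almost everywhere on ℝⁿ. -/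

import Mathlib

open MeasureTheory Set ENNReal Filter

noncomputable section

abbrev Euc (n : ℕ) : Type := EuclideanSpace ℝ (Fin n)

def annulus (n : ℕ) (j : ℤ) : Set (Euc n) :=
  {x : Euc n | (2 : ℝ) ^ (j - 1) ≤ ‖x‖ ∧ ‖x‖ < (2 : ℝ) ^ j}

def herzNorm (n : ℕ) (s : ℝ) (q r : ℝ≥0∞) (f : Euc n → ℝ) : ℝ≥0∞ :=
  if r = ⊤ then
    ⨆ j : ℤ, ENNReal.ofReal ((2 : ℝ) ^ ((j : ℝ) * s)) *
      eLpNorm ((annulus n j).indicator f) q volume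
  else
    (∑' j : ℤ, (ENNReal.ofReal ((2 : ℝ) ^ ((j : ℝ) * s)) *
      eLpNorm ((annulus n j).indicator f) q volume) ^ r.toReal) ^ (1 / r.toReal)

def heatKernel (n : ℕ) (t : ℝ) (x y : Euc n) : ℝ :=
  (4 * Real.pi * t) ^ (-(n : ℝ) / 2) * Real.exp (-‖x - y‖ ^ 2 / (4 * t))

def heatSemigroup (n : ℕ) (t : ℝ) (f : Euc n → ℝ) (x : Euc n) : ℝ :=
  ∫ y, heatKernel n t x y * f y

def nonlin (n : ℕ) (γ α : ℝ) (v : Euc n → ℝ) (x : Euc n) : ℝ :=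
  ‖x‖ ^ γ * |v x| ^ (α - 1) * v x

/-- `u` is a mild solution of the Hardy–Hénon equation
`∂ₜu - Δu = |x|^γ |u|^{α-1} u` on `(0,T) × ℝⁿ` with initial data `u₀`:
`u` is measurable, and for a.e. `(t,x) ∈ (0,T) × ℝⁿ` the relevant integrals
converge absolutely and the Duhamel formula holds. -/
def IsMildSolution (n : ℕ) (γ α T : ℝ) (u₀ : Euc n → ℝ) (u : ℝ → Euc n → ℝ) : Prop :=
  Measurable (Function.uncurry u) ∧
  ∀ᵐ p : ℝ × Euc n ∂((volume.restrict (Set.Ioo (0 : ℝ) T)).prod volume),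
    (Integrable (fun y => heatKernel n p.1 p.2 y * u₀ y) volume) ∧
    (Integrable (fun z : ℝ × Euc n =>
        heatKernel n (p.1 - z.1) p.2 z.2 * nonlin n γ α (u z.1) z.2)
      ((volume.restrict (Set.Ioo (0 : ℝ) p.1)).prod volume)) ∧
    u p.1 p.2 = heatSemigroup n p.1 u₀ p.2 +
      ∫ z : ℝ × Euc n, heatKernel n (p.1 - z.1) p.2 z.2 * nonlin n γ α (u z.1) z.2
        ∂((volume.restrict (Set.Ioo (0 : ℝ) p.1)).prod volume)

/-- `f` belongs to `𝒦̇^s_{q,r}(ℝⁿ)`, the closure of `C_c^∞(ℝⁿ)` in the Herz space. -/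
def MemHerzClosure (n : ℕ) (s : ℝ) (q r : ℝ≥0∞) (f : Euc n → ℝ) : Prop :=
  herzNorm n s q r f < ⊤ ∧
  ∀ ε : ℝ, 0 < ε → ∃ g : Euc n → ℝ, ContDiff ℝ (⊤ : ℕ∞) g ∧ HasCompactSupport g ∧
    herzNorm n s q r (fun x => f x - g x) < ENNReal.ofReal ε

/-- `t ↦ u t` is continuous on `I` with respect to the Herz quasi-norm. -/
def HerzContinuousOn (n : ℕ) (s : ℝ) (q r : ℝ≥0∞) (u : ℝ → Euc n → ℝ) (I : Set ℝ) : Prop :=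
  ∀ t₀ ∈ I, ∀ ε : ℝ, 0 < ε → ∃ δ : ℝ, 0 < δ ∧ ∀ t ∈ I, |t - t₀| < δ →
    herzNorm n s q r (fun x => u t x - u t₀ x) < ENNReal.ofReal ε

/-!
The difference `w` of two mild solutions satisfies a Duhamel formula without initial data, and its
nonlinearity is at most `|x|^γ (|u₁|^{α-1} + |u₂|^{α-1}) |w|` up to a constant. In the
scale-critical case the heat semigroup maps `K̇^{αs-γ}_{q/α,∞}` to `K̇^s_{q,∞}` with norm of order
`(t-τ)⁻¹`, which is not integrable. The time integral is nevertheless bounded without any loss: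
between two fixed annuli the space-time integral converges because parabolic scaling makes the
time scale `4^{max(j,k)}` dominant, and the strict inequalities between the exponents make the
resulting constants decay geometrically in `|j - k|`.

This endpoint bound carries no small factor in time, so smallness comes from the data. At a time
`t₀` up to which the solutions agree, approximate `u₁(t₀)` by a function `φ` in `C_c`. The part of
the nonlinearity with `|uᵢ - φ|^{α-1}` is small by continuity in time, and the part with
`|φ|^{α-1}` is subcritical and gains a power of `t - t₀`. Hence `w` vanishes shortly after `t₀`,
and continuity in time propagates the equality to the whole interval.
-/

/-! ### Integral inequalities -/

lemma rpow_sub_one_mul_self (x : ℝ≥0∞) {p : ℝ} (hp : 1 ≤ p) : x ^ (p - 1) * x = x ^ p := by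
  simpa using (ENNReal.rpow_add_of_nonneg (x := x) (p - 1) 1 (by linarith) zero_le_one).symm

section IntegralInequalities

variable {X Y : Type*} [MeasurableSpace X] [MeasurableSpace Y] {μ : Measure X} {ν : Measure Y}

lemma eLpNorm'_rpow {f : X → ℝ≥0∞} {p : ℝ} (hp : 0 < p) :
    eLpNorm' f p μ ^ p = ∫⁻ x, f x ^ p ∂μ := by
  simpa using (lintegral_rpow_enorm_eq_rpow_eLpNorm' (f := f) (μ := μ) hp).symm

lemma eLpNorm'_const_mul_ennreal (c : ℝ≥0∞) {f : X → ℝ≥0∞} (hf : Measurable f) {p : ℝ}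
    (hp : 0 < p) : eLpNorm' (fun x => c * f x) p μ = c * eLpNorm' f p μ := by
  refine (ENNReal.strictMono_rpow_of_pos hp).injective ?_
  simp only [ENNReal.mul_rpow_of_nonneg _ _ hp.le, eLpNorm'_rpow hp]
  exact lintegral_const_mul _ (hf.pow_const p)

lemma eLpNorm'_le_of_le_on {f g : X → ℝ≥0∞} {p : ℝ} (hp : 0 ≤ p) {A : Set X}
    (hA : MeasurableSet A) (h : ∀ x ∈ A, f x ≤ g x) :
    eLpNorm' f p (μ.restrict A) ≤ eLpNorm' g p (μ.restrict A) :=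
  eLpNorm'_mono_enorm_ae hp ((ae_restrict_iff' hA).2 (.of_forall fun x hx => by simpa using h x hx))

lemma eLpNorm'_indicator_restrict {f : X → ℝ≥0∞} {p : ℝ} (hp : 0 < p) {A : Set X}
    (hA : MeasurableSet A) : eLpNorm' (A.indicator f) p μ = eLpNorm' f p (μ.restrict A) := by
  simp only [eLpNorm', enorm_eq_self, ← lintegral_indicator hA]
  congr! 3 with x
  by_cases hx : x ∈ A <;> simp [hx, hp]

lemma eLpNorm'_rpow_mul_le {v w : X → ℝ≥0∞} (hv : Measurable v) (hw : Measurable w) {α q : ℝ}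
    (hα : 1 ≤ α) (hq : 0 < q) :
    eLpNorm' (fun x => v x ^ (α - 1) * w x) (q / α) μ ≤
      eLpNorm' v q μ ^ (α - 1) * eLpNorm' w q μ := by
  have hα₀ : 0 < α := by linarith
  have hα₁ : 0 ≤ (α - 1) / α := div_nonneg (by linarith) hα₀.le
  have hqα : 0 < q / α := by positivity
  rw [← ENNReal.rpow_le_rpow_iff hqα, eLpNorm'_rpow hqα]
  calc ∫⁻ x, (v x ^ (α - 1) * w x) ^ (q / α) ∂μ
      = ∫⁻ x, (v x ^ q) ^ ((α - 1) / α) * (w x ^ q) ^ (1 / α) ∂μ := by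
        congr with x
        rw [ENNReal.mul_rpow_of_nonneg _ _ hqα.le]
        simp only [← ENNReal.rpow_mul]
        ring_nf
    _ ≤ (∫⁻ x, v x ^ q ∂μ) ^ ((α - 1) / α) * (∫⁻ x, w x ^ q ∂μ) ^ (1 / α) :=
        ENNReal.lintegral_mul_norm_pow_le (hv.pow_const q).aemeasurable
          (hw.pow_const q).aemeasurable hα₁ (by positivity) (by field_simp; ring)
    _ = (eLpNorm' v q μ ^ (α - 1) * eLpNorm' w q μ) ^ (q / α) := by
        rw [← eLpNorm'_rpow hq, ← eLpNorm'_rpow hq, ENNReal.mul_rpow_of_nonneg _ _ hqα.le]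
        simp only [← ENNReal.rpow_mul]
        ring_nf

lemma lintegral_mul_rpow_le_weighted {g f : X → ℝ≥0∞} (hg : Measurable g) (hf : Measurable f)
    (hg_top : ∀ᵐ x ∂μ, g x ≠ ⊤) {q : ℝ} (hq : 1 ≤ q) :
    (∫⁻ x, g x * f x ∂μ) ^ q ≤ (∫⁻ x, g x * f x ^ q ∂μ) * (∫⁻ x, g x ∂μ) ^ (q - 1) := by
  have hq0 : 0 < q := by linarith
  have split : ∀ᵐ x ∂μ, g x * f x = (g x * f x ^ q) ^ (1 / q) * g x ^ (1 - 1 / q) := by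
    filter_upwards [hg_top] with x hx
    rw [ENNReal.mul_rpow_of_nonneg _ _ (by positivity), ← ENNReal.rpow_mul,
      mul_one_div_cancel hq0.ne', ENNReal.rpow_one]
    rcases eq_or_ne (g x) 0 with h0 | h0
    · simp [h0, hq0]
    · rw [mul_right_comm, ← ENNReal.rpow_add _ _ h0 hx]
      simp
  calc (∫⁻ x, g x * f x ∂μ) ^ q
      = (∫⁻ x, (g x * f x ^ q) ^ (1 / q) * g x ^ (1 - 1 / q) ∂μ) ^ q := by
        rw [lintegral_congr_ae split]
    _ ≤ ((∫⁻ x, g x * f x ^ q ∂μ) ^ (1 / q) * (∫⁻ x, g x ∂μ) ^ (1 - 1 / q)) ^ q := by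
        have hq' : 0 ≤ 1 - 1 / q := sub_nonneg.2 ((div_le_one hq0).2 hq)
        gcongr
        exact ENNReal.lintegral_mul_norm_pow_le (hg.mul (hf.pow_const q)).aemeasurable
          hg.aemeasurable (by positivity) hq' (by ring)
    _ = (∫⁻ x, g x * f x ^ q ∂μ) * (∫⁻ x, g x ∂μ) ^ (q - 1) := by
        rw [ENNReal.mul_rpow_of_nonneg _ _ hq0.le, ← ENNReal.rpow_mul, ← ENNReal.rpow_mul,
          one_div_mul_cancel hq0.ne', ENNReal.rpow_one]
        congr 2
        field_simp

lemma lintegral_lintegral_mul_rpow_le [SFinite μ] [SFinite ν] {φ : Y → ℝ≥0∞} (hφ : Measurable φ)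
    (φ_fin : ∀ᵐ y ∂ν, φ y ≠ ⊤) {G : X → Y → ℝ≥0∞} (hG : Measurable (Function.uncurry G))
    {q : ℝ} (hq : 1 ≤ q) :
    ∫⁻ x, (∫⁻ y, φ y * G x y ∂ν) ^ q ∂μ
      ≤ (∫⁻ y, φ y * ∫⁻ x, G x y ^ q ∂μ ∂ν) * (∫⁻ y, φ y ∂ν) ^ (q - 1) := by
  have hm : Measurable fun z : X × Y => φ z.2 * G z.1 z.2 ^ q :=
    (hφ.comp measurable_snd).mul (hG.pow_const q)
  calc ∫⁻ x, (∫⁻ y, φ y * G x y ∂ν) ^ q ∂μ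
      ≤ ∫⁻ x, (∫⁻ y, φ y * G x y ^ q ∂ν) * (∫⁻ y, φ y ∂ν) ^ (q - 1) ∂μ :=
        lintegral_mono fun x => lintegral_mul_rpow_le_weighted hφ
          (hG.comp measurable_prodMk_left) φ_fin hq
    _ = (∫⁻ y, (∫⁻ x, φ y * G x y ^ q ∂μ) ∂ν) * (∫⁻ y, φ y ∂ν) ^ (q - 1) := by
        rw [lintegral_mul_const _ hm.lintegral_prod_right',
          lintegral_lintegral_swap hm.aemeasurable]
    _ = (∫⁻ y, φ y * ∫⁻ x, G x y ^ q ∂μ ∂ν) * (∫⁻ y, φ y ∂ν) ^ (q - 1) := by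
        congr 1
        exact lintegral_congr fun y =>
          lintegral_const_mul _ ((hG.comp measurable_prodMk_right).pow_const q)

lemma eLpNorm'_lintegral_le [SFinite μ] [SFinite ν] {H : X → Y → ℝ≥0∞}
    (hH : Measurable (Function.uncurry H)) {q : ℝ} (hq : 1 ≤ q) :
    eLpNorm' (fun x => ∫⁻ y, H x y ∂ν) q μ ≤ ∫⁻ y, eLpNorm' (fun x => H x y) q μ ∂ν := by
  have hq0 : 0 < q := by linarith
  let φ : Y → ℝ≥0∞ := fun y => eLpNorm' (fun x => H x y) q μ
  have hφ : Measurable φ := by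
    simp only [φ, eLpNorm', enorm_eq_self]
    exact (Measurable.lintegral_prod_left' (hH.pow_const q)).pow_const _
  have hφX : Measurable fun z : X × Y => φ z.2 := hφ.comp measurable_snd
  rcases eq_or_ne (∫⁻ y, φ y ∂ν) ⊤ with htop | htop
  · exact htop.symm ▸ le_top
  have φ_fin : ∀ᵐ y ∂ν, φ y ≠ ⊤ := (ae_lt_top hφ htop).mono fun _ => ne_of_lt
  let G : X → Y → ℝ≥0∞ := fun x y => (φ y)⁻¹ * H x y
  have hG : Measurable (Function.uncurry G) := hφX.inv.mul hH
  have H_eq : ∀ᵐ x ∂μ, ∀ᵐ y ∂ν, H x y = φ y * G x y := by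
    have hmeas : MeasurableSet {z : X × Y | H z.1 z.2 = φ z.2 * G z.1 z.2} :=
      measurableSet_eq_fun hH (hφX.mul hG)
    refine (Measure.ae_ae_comm hmeas).2 ?_
    filter_upwards [φ_fin] with y hy
    rcases eq_or_ne (φ y) 0 with h0 | h0
    · filter_upwards [ae_eq_zero_of_eLpNorm'_eq_zero hq0.le
        (hH.comp measurable_prodMk_right).aestronglyMeasurable h0] with x hx
      simpa [h0] using hx
    · exact .of_forall fun x => by simp only [G, ← mul_assoc, ENNReal.mul_inv_cancel h0 hy, one_mul]
  have G_norm (y : Y) : ∫⁻ x, G x y ^ q ∂μ ≤ 1 := by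
    have hHy : Measurable fun x => H x y := hH.comp measurable_prodMk_right
    rw [← eLpNorm'_rpow hq0, eLpNorm'_const_mul_ennreal _ hHy hq0]
    exact ENNReal.rpow_le_one (ENNReal.inv_mul_le_one _) hq0.le
  refine (ENNReal.rpow_le_rpow_iff hq0).1 ?_
  calc eLpNorm' (fun x => ∫⁻ y, H x y ∂ν) q μ ^ q
      = ∫⁻ x, (∫⁻ y, φ y * G x y ∂ν) ^ q ∂μ := by
        rw [eLpNorm'_rpow hq0]
        exact lintegral_congr_ae (H_eq.mono fun x hx => by dsimp only; rw [lintegral_congr_ae hx])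
    _ ≤ (∫⁻ y, φ y * ∫⁻ x, G x y ^ q ∂μ ∂ν) * (∫⁻ y, φ y ∂ν) ^ (q - 1) :=
        lintegral_lintegral_mul_rpow_le hφ φ_fin hG hq
    _ ≤ (∫⁻ y, φ y ∂ν) ^ q := by
        rw [← rpow_sub_one_mul_self _ hq, mul_comm]
        gcongr with y
        exact mul_le_of_le_one_right' (G_norm y)

lemma eLpNorm'_tsum_le {ι : Type*} [Countable ι] [SFinite μ] {f : ι → X → ℝ≥0∞}
    (hf : ∀ i, Measurable (f i)) {q : ℝ} (hq : 1 ≤ q) :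
    eLpNorm' (fun x => ∑' i, f i x) q μ ≤ ∑' i, eLpNorm' (f i) q μ := by
  let : MeasurableSpace ι := ⊤
  simp_rw [← lintegral_count]
  exact eLpNorm'_lintegral_le (H := fun x i => f i x) (measurable_from_prod_countable_left hf) hq

end IntegralInequalities

/-! ### Powers of two and integrals of powers of time -/

lemma two_rpow_mul_two_rpow (a b : ℝ) : (2 : ℝ≥0∞) ^ a * 2 ^ b = 2 ^ (a + b) :=
  (ENNReal.rpow_add a b two_ne_zero ofNat_ne_top).symm

lemma two_rpow_ne_top (a : ℝ) : (2 : ℝ≥0∞) ^ a ≠ ⊤ := by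
  simp [ENNReal.rpow_eq_top_iff]

lemma ofReal_two_rpow (a : ℝ) : ENNReal.ofReal ((2 : ℝ) ^ a) = (2 : ℝ≥0∞) ^ a := by
  rw [← ENNReal.ofReal_rpow_of_pos zero_lt_two]
  simp

lemma ofReal_two_rpow_rpow (a b : ℝ) :
    (ENNReal.ofReal ((2 : ℝ) ^ a)) ^ b = (2 : ℝ≥0∞) ^ (a * b) := by
  rw [ofReal_two_rpow, ENNReal.rpow_mul]

lemma tsum_two_rpow_neg_mul_abs_ne_top {ε : ℝ} (hε : 0 < ε) :
    ∑' i : ℤ, (2 : ℝ≥0∞) ^ (-(ε * |(i : ℝ)|)) ≠ ⊤ := by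
  let x : ℝ := 2 ^ (-ε)
  have hx0 : 0 ≤ x := by positivity
  have hx1 : x < 1 := Real.rpow_lt_one_of_one_lt_of_neg one_lt_two (by linarith)
  have hterm (i : ℤ) : (2 : ℝ≥0∞) ^ (-(ε * |(i : ℝ)|)) = ENNReal.ofReal (x ^ i.natAbs) := by
    rw [← ofReal_two_rpow, ← Real.rpow_natCast, ← Real.rpow_mul zero_le_two, neg_mul,
      Nat.cast_natAbs, Int.cast_abs]
  have hsum : Summable fun i : ℤ => x ^ i.natAbs :=
    .of_nat_of_neg (by simpa using summable_geometric_of_lt_one hx0 hx1)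
      (by simpa using summable_geometric_of_lt_one hx0 hx1)
  simp_rw [hterm, ← ENNReal.ofReal_tsum_of_nonneg (fun i : ℤ => pow_nonneg hx0 i.natAbs) hsum]
  exact ENNReal.ofReal_ne_top

lemma tsum_two_rpow_neg_mul_abs_sub (ε : ℝ) (j : ℤ) :
    ∑' k : ℤ, (2 : ℝ≥0∞) ^ (-(ε * |(k : ℝ) - j|)) = ∑' i : ℤ, (2 : ℝ≥0∞) ^ (-(ε * |(i : ℝ)|)) := by
  rw [← (Equiv.addRight j).tsum_eq]
  simp

lemma measurable_ofReal_rpow (c : ℝ) : Measurable fun τ : ℝ => (ENNReal.ofReal τ) ^ c :=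
  ENNReal.measurable_ofReal.pow_const c

lemma lintegral_Ioc_rpow_neg {c R : ℝ} (hc : c < 1) (hR : 0 < R) :
    ∫⁻ τ in Ioc 0 R, (ENNReal.ofReal τ) ^ (-c) =
      ENNReal.ofReal (1 / (1 - c)) * (ENNReal.ofReal R) ^ (1 - c) := by
  have hInt : IntegrableOn (fun τ : ℝ => τ ^ (-c)) (Ioc 0 R) := by
    rw [← intervalIntegrable_iff_integrableOn_Ioc_of_le hR.le]
    exact intervalIntegral.intervalIntegrable_rpow' (by linarith)
  have hpos : ∀ᵐ τ ∂volume.restrict (Ioc 0 R), 0 ≤ τ ^ (-c) :=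
    (ae_restrict_mem measurableSet_Ioc).mono fun τ hτ => Real.rpow_nonneg hτ.1.le _
  calc ∫⁻ τ in Ioc 0 R, (ENNReal.ofReal τ) ^ (-c)
      = ∫⁻ τ in Ioc 0 R, ENNReal.ofReal (τ ^ (-c)) :=
        setLIntegral_congr_fun measurableSet_Ioc fun τ hτ => ENNReal.ofReal_rpow_of_pos hτ.1
    _ = ENNReal.ofReal (R ^ (1 - c) / (1 - c)) := by
        rw [← ofReal_integral_eq_lintegral_ofReal hInt hpos,
          ← intervalIntegral.integral_of_le hR.le, integral_rpow (.inl (by linarith)),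
          Real.zero_rpow (by linarith), sub_zero, neg_add_eq_sub]
    _ = ENNReal.ofReal (1 / (1 - c)) * (ENNReal.ofReal R) ^ (1 - c) := by
        rw [ENNReal.ofReal_rpow_of_pos hR, ← ENNReal.ofReal_mul (by simpa using hc.le),
          one_div_mul_eq_div]

lemma lintegral_Ioi_rpow_neg {c R : ℝ} (hc : 1 < c) (hR : 0 < R) :
    ∫⁻ τ in Ioi R, (ENNReal.ofReal τ) ^ (-c) =
      ENNReal.ofReal (1 / (c - 1)) * (ENNReal.ofReal R) ^ (1 - c) := by
  have hInt : IntegrableOn (fun τ : ℝ => τ ^ (-c)) (Ioi R) :=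
    integrableOn_Ioi_rpow_of_lt (by linarith) hR
  have hpos : ∀ᵐ τ ∂volume.restrict (Ioi R), 0 ≤ τ ^ (-c) :=
    (ae_restrict_mem measurableSet_Ioi).mono fun τ hτ => Real.rpow_nonneg (hR.trans hτ).le _
  calc ∫⁻ τ in Ioi R, (ENNReal.ofReal τ) ^ (-c)
      = ∫⁻ τ in Ioi R, ENNReal.ofReal (τ ^ (-c)) :=
        setLIntegral_congr_fun measurableSet_Ioi fun τ hτ =>
          ENNReal.ofReal_rpow_of_pos (hR.trans hτ)
    _ = ENNReal.ofReal (R ^ (1 - c) / (c - 1)) := by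
        rw [← ofReal_integral_eq_lintegral_ofReal hInt hpos,
          integral_Ioi_rpow_of_lt (by linarith) hR, neg_add_eq_sub, neg_div, ← div_neg, neg_sub]
    _ = ENNReal.ofReal (1 / (c - 1)) * (ENNReal.ofReal R) ^ (1 - c) := by
        rw [ENNReal.ofReal_rpow_of_pos hR, ← ENNReal.ofReal_mul (by simpa using hc.le),
          one_div_mul_eq_div]

lemma rpow_neg_le_of_lt {h θ τ : ℝ} (c : ℝ) (hτ : 0 < τ) (hh : τ < h) (hθ : 0 ≤ θ) :
    (ENNReal.ofReal τ) ^ (-c) ≤ (ENNReal.ofReal h) ^ θ * (ENNReal.ofReal τ) ^ (-(c + θ)) := by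
  have h0 : ENNReal.ofReal τ ≠ 0 := by simpa using hτ
  calc (ENNReal.ofReal τ) ^ (-c) = (ENNReal.ofReal τ) ^ θ * (ENNReal.ofReal τ) ^ (-(c + θ)) := by
        rw [← ENNReal.rpow_add _ _ h0 ENNReal.ofReal_ne_top]
        ring_nf
    _ ≤ (ENNReal.ofReal h) ^ θ * (ENNReal.ofReal τ) ^ (-(c + θ)) := by
        gcongr

/-- The two singularities are split at the free time scale `R`; the factor `h ^ θ` is bought by
worsening both exponents by `θ`. -/
lemma lintegral_min_rpow_neg_le {h θ δ c R : ℝ} (hθ : 0 ≤ θ) (hδ : δ + θ < 1) (hc : 1 < c + θ)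
    (hR : 0 < R) (A B : ℝ≥0∞) :
    ∫⁻ τ in Ioo 0 h, min (A * (ENNReal.ofReal τ) ^ (-δ)) (B * (ENNReal.ofReal τ) ^ (-c)) ≤
      (ENNReal.ofReal h) ^ θ *
        (A * (ENNReal.ofReal (1 / (1 - (δ + θ))) * (ENNReal.ofReal R) ^ (1 - (δ + θ))) +
          B * (ENNReal.ofReal (1 / (c + θ - 1)) * (ENNReal.ofReal R) ^ (1 - (c + θ)))) := by
  have part {E : Set ℝ} (hE : MeasurableSet E) (D : ℝ≥0∞) (a : ℝ) :
      ∫⁻ τ in Ioo 0 h ∩ E, D * (ENNReal.ofReal τ) ^ (-a)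
        ≤ (ENNReal.ofReal h) ^ θ * (D * ∫⁻ τ in Ioo 0 h ∩ E, (ENNReal.ofReal τ) ^ (-(a + θ))) := by
    rw [← lintegral_const_mul _ (measurable_ofReal_rpow _),
      ← lintegral_const_mul _ ((measurable_ofReal_rpow _).const_mul D)]
    refine setLIntegral_mono' (measurableSet_Ioo.inter hE) fun τ hτ => ?_
    rw [mul_left_comm]
    gcongr
    exact rpow_neg_le_of_lt a hτ.1.1 hτ.1.2 hθ
  rw [← lintegral_inter_add_sdiff _ _ (measurableSet_Iic (a := R)), mul_add, sdiff_eq, compl_Iic]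
  gcongr ?_ + ?_
  · calc _ ≤ _ := lintegral_mono fun τ => min_le_left _ _
      _ ≤ _ := part measurableSet_Iic A δ
      _ ≤ _ := by
        rw [← lintegral_Ioc_rpow_neg hδ hR]
        gcongr
        exact fun τ hτ => ⟨hτ.1.1, hτ.2⟩
  · calc _ ≤ _ := lintegral_mono fun τ => min_le_right _ _
      _ ≤ _ := part measurableSet_Ioi B c
      _ ≤ _ := by
        rw [← lintegral_Ioi_rpow_neg hc hR]
        gcongr
        exact inter_subset_right

lemma lintegral_Ioo_sub_left (f : ℝ → ℝ≥0∞) (t₀ t : ℝ) :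
    ∫⁻ τ in Ioo t₀ t, f (t - τ) = ∫⁻ σ in Ioo 0 (t - t₀), f σ := by
  rw [← lintegral_indicator measurableSet_Ioo, ← lintegral_indicator measurableSet_Ioo,
    ← lintegral_sub_left_eq_self _ t]
  congr with τ
  simp [indicator, lt_sub_comm, and_comm]

/-! ### The heat kernel -/

/-- The heat kernel with values in `ℝ≥0∞`, so that all integrals against it make sense. -/
def eHeatKernel (n : ℕ) (τ : ℝ) (x y : Euc n) : ℝ≥0∞ := ENNReal.ofReal (heatKernel n τ x y)

lemma heatKernel_nonneg (n : ℕ) {τ : ℝ} (hτ : 0 < τ) (x y : Euc n) : 0 ≤ heatKernel n τ x y := by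
  unfold heatKernel
  positivity

lemma eHeatKernel_comm (n : ℕ) (τ : ℝ) (x y : Euc n) :
    eHeatKernel n τ x y = eHeatKernel n τ y x := by
  simp only [eHeatKernel, heatKernel, norm_sub_rev]

lemma measurable_eHeatKernel {Ω : Type*} [MeasurableSpace Ω] {n : ℕ} {τ : Ω → ℝ} {x y : Ω → Euc n}
    (hτ : Measurable τ) (hx : Measurable x) (hy : Measurable y) :
    Measurable fun ω => eHeatKernel n (τ ω) (x ω) (y ω) := by
  unfold eHeatKernel heatKernel
  fun_prop

lemma heatKernel_le_rpow_mul_exp (n : ℕ) {τ : ℝ} (hτ : 0 < τ) (x y : Euc n) :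
    heatKernel n τ x y ≤ τ ^ (-((n : ℝ) / 2)) * Real.exp (-(‖x - y‖ ^ 2 / (4 * τ))) := by
  unfold heatKernel
  rw [neg_div, neg_div]
  gcongr ?_ * _
  refine Real.rpow_le_rpow_of_nonpos hτ ?_ (neg_nonpos.2 (by positivity))
  nlinarith [Real.pi_gt_three]

lemma eHeatKernel_le_rpow (n : ℕ) {τ : ℝ} (hτ : 0 < τ) (x y : Euc n) :
    eHeatKernel n τ x y ≤ (ENNReal.ofReal τ) ^ (-((n : ℝ) / 2)) := by
  rw [ENNReal.ofReal_rpow_of_pos hτ]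
  refine ENNReal.ofReal_le_ofReal ((heatKernel_le_rpow_mul_exp n hτ x y).trans ?_)
  refine mul_le_of_le_one_right (by positivity) (Real.exp_le_one_iff.2 (neg_nonpos.2 ?_))
  positivity

lemma rpow_le_rpow_self_mul_exp {v p : ℝ} (hv : 0 ≤ v) (hp : 0 ≤ p) :
    v ^ p ≤ p ^ p * Real.exp v := by
  rcases hp.eq_or_lt with rfl | hp
  · simpa using hv
  calc v ^ p = p ^ p * (v / p) ^ p := by
        rw [← Real.mul_rpow hp.le (by positivity), mul_div_cancel₀ _ hp.ne']
    _ ≤ p ^ p * Real.exp (v / p) ^ p := by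
        gcongr
        linarith [Real.add_one_le_exp (v / p)]
    _ = p ^ p * Real.exp v := by rw [← Real.exp_mul, div_mul_cancel₀ _ hp.ne']

lemma eHeatKernel_le_of_le_norm_sub (n : ℕ) {τ d : ℝ} (hτ : 0 < τ) (hd : 0 < d) {x y : Euc n}
    (hxy : d ≤ ‖x - y‖) :
    eHeatKernel n τ x y ≤
      ENNReal.ofReal ((2 * n : ℝ) ^ ((n : ℝ) / 2)) * (ENNReal.ofReal d) ^ (-(n : ℝ)) := by
  rw [ENNReal.ofReal_rpow_of_pos hd, ← ENNReal.ofReal_mul (by positivity)]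
  refine ENNReal.ofReal_le_ofReal ((heatKernel_le_rpow_mul_exp n hτ x y).trans ?_)
  let p : ℝ := n / 2
  let v : ℝ := d ^ 2 / (4 * τ)
  have hp : 0 ≤ p := by positivity
  have hv : 0 < v := by positivity
  have hτ_eq : τ ^ (-p) = 4 ^ p * v ^ p * d ^ (-(n : ℝ)) := by
    have hτv : τ = (4 * v)⁻¹ * d ^ 2 := by simp only [v]; field_simp
    rw [hτv, Real.mul_rpow (by positivity) (by positivity), Real.inv_rpow (by positivity),
      Real.rpow_neg (by positivity), inv_inv, Real.mul_rpow (by positivity) hv.le,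
      ← Real.rpow_natCast d 2, ← Real.rpow_mul hd.le]
    congr 2
    simp only [p]
    push_cast
    ring
  calc τ ^ (-p) * Real.exp (-(‖x - y‖ ^ 2 / (4 * τ)))
      ≤ τ ^ (-p) * Real.exp (-v) := by
        simp only [v]
        gcongr
    _ ≤ 4 ^ p * (p ^ p * Real.exp v) * d ^ (-(n : ℝ)) * Real.exp (-v) := by
        rw [hτ_eq]
        gcongr
        exact rpow_le_rpow_self_mul_exp hv.le hp
    _ = (4 * p) ^ p * d ^ (-(n : ℝ)) * (Real.exp v * Real.exp (-v)) := by
        rw [Real.mul_rpow (by norm_num) hp]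
        ring
    _ = (2 * n) ^ p * d ^ (-(n : ℝ)) := by
        rw [← Real.exp_add, add_neg_cancel, Real.exp_zero, mul_one,
          show 4 * p = 2 * n by simp only [p]; ring]

lemma lintegral_eHeatKernel_right (n : ℕ) {τ : ℝ} (hτ : 0 < τ) (x : Euc n) :
    ∫⁻ y, eHeatKernel n τ x y = 1 := by
  let b : ℝ := (4 * τ)⁻¹
  have hb : 0 < b := by positivity
  have hgauss := GaussianFourier.integral_rexp_neg_mul_sq_norm (V := Euc n) hb
  have hint : Integrable fun v : Euc n => Real.exp (-b * ‖v‖ ^ 2) :=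
    .of_integral_ne_zero (hgauss ▸ (by positivity))
  have hkernel (y : Euc n) :
      heatKernel n τ x y = (4 * Real.pi * τ) ^ (-(n : ℝ) / 2) * Real.exp (-b * ‖x - y‖ ^ 2) := by
    rw [heatKernel, neg_div _ (‖x - y‖ ^ 2), div_eq_inv_mul _ (4 * τ), neg_mul]
  simp only [eHeatKernel]
  rw [← ofReal_integral_eq_lintegral_ofReal]
  · simp_rw [hkernel]
    rw [integral_const_mul, integral_sub_left_eq_self (fun v => Real.exp (-b * ‖v‖ ^ 2)), hgauss,
      div_inv_eq_mul, finrank_euclideanSpace, Fintype.card_fin,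
      show Real.pi * (4 * τ) = 4 * Real.pi * τ by ring, neg_div, Real.rpow_neg (by positivity),
      inv_mul_cancel₀ (by positivity), ENNReal.ofReal_one]
  · exact ((hint.comp_sub_left x).const_mul _).congr (.of_forall fun y => (hkernel y).symm)
  · exact .of_forall fun y => heatKernel_nonneg n hτ x y

lemma lintegral_eHeatKernel_left (n : ℕ) {τ : ℝ} (hτ : 0 < τ) (y : Euc n) :
    ∫⁻ x, eHeatKernel n τ x y = 1 := by
  simp_rw [fun x => eHeatKernel_comm n τ x y]
  exact lintegral_eHeatKernel_right n hτ y

lemma rpow_lintegral_eHeatKernel_mul_le (n : ℕ) {τ : ℝ} (hτ : 0 < τ) {F : Euc n → ℝ≥0∞}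
    (hF : Measurable F) {p : ℝ} (hp : 1 ≤ p) (x : Euc n) :
    (∫⁻ y, eHeatKernel n τ x y * F y) ^ p ≤ ∫⁻ y, eHeatKernel n τ x y * F y ^ p := by
  have hK : Measurable (eHeatKernel n τ x) :=
    measurable_eHeatKernel measurable_const measurable_const measurable_id
  have := lintegral_mul_rpow_le_weighted (μ := volume) hK hF
    (.of_forall fun _ => ENNReal.ofReal_ne_top) hp
  rwa [lintegral_eHeatKernel_right n hτ x, ENNReal.one_rpow, mul_one] at this

lemma lintegral_eHeatKernel_mul_le (n : ℕ) {τ : ℝ} (hτ : 0 < τ) {F : Euc n → ℝ≥0∞}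
    (hF : Measurable F) (x : Euc n) :
    ∫⁻ y, eHeatKernel n τ x y * F y ≤ (ENNReal.ofReal τ) ^ (-((n : ℝ) / 2)) * ∫⁻ y, F y := by
  rw [← lintegral_const_mul _ hF]
  gcongr with y
  exact eHeatKernel_le_rpow n hτ x y

lemma lintegral_lintegral_eHeatKernel_mul (n : ℕ) {τ : ℝ} (hτ : 0 < τ) {F : Euc n → ℝ≥0∞}
    (hF : Measurable F) : ∫⁻ x, ∫⁻ y, eHeatKernel n τ x y * F y = ∫⁻ y, F y := by
  have hm : Measurable fun z : Euc n × Euc n => eHeatKernel n τ z.1 z.2 * F z.2 :=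
    (measurable_eHeatKernel measurable_const measurable_fst measurable_snd).mul
      (hF.comp measurable_snd)
  rw [lintegral_lintegral_swap hm.aemeasurable]
  refine lintegral_congr fun y => ?_
  have hy : Measurable fun x => eHeatKernel n τ x y :=
    measurable_eHeatKernel measurable_const measurable_id measurable_const
  rw [lintegral_mul_const _ hy, lintegral_eHeatKernel_left n hτ, one_mul]

/-- Raising Jensen's inequality `(e^{τΔ}F)^p ≤ e^{τΔ}F^p` to the power `q / p`, one factor is
integrated by Tonelli and the remaining `q / p - 1` are bounded by the maximum of the kernel. -/
lemma eLpNorm'_lintegral_eHeatKernel_mul_le (n : ℕ) {τ : ℝ} (hτ : 0 < τ) {F : Euc n → ℝ≥0∞}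
    (hF : Measurable F) {p q : ℝ} (hp : 1 ≤ p) (hpq : p ≤ q) :
    eLpNorm' (fun x => ∫⁻ y, eHeatKernel n τ x y * F y) q volume ≤
      (ENNReal.ofReal τ) ^ (-((n : ℝ) / 2 * (1 / p - 1 / q))) * eLpNorm' F p volume := by
  have hp0 : 0 < p := by linarith
  have hq0 : 0 < q := by linarith
  have hr : 0 ≤ q / p - 1 := sub_nonneg.2 ((one_le_div hp0).2 hpq)
  have hFp : Measurable fun y => F y ^ p := hF.pow_const p
  let K : ℝ≥0∞ := (ENNReal.ofReal τ) ^ (-((n : ℝ) / 2))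
  let I : ℝ≥0∞ := ∫⁻ y, F y ^ p
  let J : Euc n → ℝ≥0∞ := fun x => ∫⁻ y, eHeatKernel n τ x y * F y ^ p
  refine (ENNReal.rpow_le_rpow_iff hq0).1 ?_
  calc eLpNorm' (fun x => ∫⁻ y, eHeatKernel n τ x y * F y) q volume ^ q
      = ∫⁻ x, ((∫⁻ y, eHeatKernel n τ x y * F y) ^ p) ^ (q / p) := by
        simp_rw [eLpNorm'_rpow hq0, ← ENNReal.rpow_mul, mul_div_cancel₀ _ hp0.ne']
    _ ≤ ∫⁻ x, J x ^ (q / p) := by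
        gcongr with x
        exact rpow_lintegral_eHeatKernel_mul_le n hτ hF hp x
    _ ≤ ∫⁻ x, (K * I) ^ (q / p - 1) * J x := by
        simp_rw [← rpow_sub_one_mul_self _ (sub_nonneg.1 hr)]
        gcongr with x
        exact lintegral_eHeatKernel_mul_le n hτ hFp x
    _ = K ^ (q / p - 1) * I ^ (q / p) := by
        have hJ : Measurable J :=
          ((measurable_eHeatKernel measurable_const measurable_fst measurable_snd).mul
            (hFp.comp measurable_snd)).lintegral_prod_right'
        rw [lintegral_const_mul _ hJ, lintegral_lintegral_eHeatKernel_mul n hτ hFp,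
          ENNReal.mul_rpow_of_nonneg _ _ hr, mul_assoc, rpow_sub_one_mul_self _ (sub_nonneg.1 hr)]
    _ = ((ENNReal.ofReal τ) ^ (-((n : ℝ) / 2 * (1 / p - 1 / q))) * eLpNorm' F p volume) ^ q := by
        simp only [K, I]
        rw [ENNReal.mul_rpow_of_nonneg _ _ hq0.le, ← ENNReal.rpow_mul, ← ENNReal.rpow_mul,
          ← eLpNorm'_rpow hp0, ← ENNReal.rpow_mul, mul_div_cancel₀ _ hp0.ne']
        congr 2
        field_simp

/-! ### Dyadic annuli and the Herz norm with `r = ∞` -/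

lemma measurableSet_annulus (n : ℕ) (k : ℤ) : MeasurableSet (annulus n k) :=
  (measurableSet_le measurable_const measurable_norm).inter
    (measurableSet_lt measurable_norm measurable_const)

lemma pairwise_disjoint_annulus (n : ℕ) : Pairwise (Function.onFun Disjoint (annulus n)) := by
  refine (pairwise_disjoint_on _).2 fun i j hij => ?_
  refine Set.disjoint_left.2 fun x hxi hxj => (hxj.1.trans_lt hxi.2).not_ge ?_
  exact zpow_le_zpow_right₀ one_le_two (by omega)

lemma exists_mem_annulus {n : ℕ} {x : Euc n} (hx : x ≠ 0) : ∃ k, x ∈ annulus n k := by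
  obtain ⟨k, hk, hk'⟩ := exists_mem_Ico_zpow (norm_pos_iff.2 hx) (one_lt_two (α := ℝ))
  exact ⟨k + 1, by simpa using hk, hk'⟩

lemma ae_exists_mem_annulus (n : ℕ) [NeZero n] : ∀ᵐ x : Euc n, ∃ k, x ∈ annulus n k :=
  (Measure.ae_ne volume 0).mono fun _ => exists_mem_annulus

lemma lintegral_eq_tsum_annulus {n : ℕ} [NeZero n] (f : Euc n → ℝ≥0∞) :
    ∫⁻ x, f x = ∑' k : ℤ, ∫⁻ x in annulus n k, f x := by
  have hcover : (⋃ k, annulus n k) =ᵐ[volume] (univ : Set (Euc n)) :=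
    eventuallyEq_univ.2 ((ae_exists_mem_annulus n).mono fun _ => mem_iUnion.2)
  rw [← lintegral_iUnion (measurableSet_annulus n) (pairwise_disjoint_annulus n),
    setLIntegral_congr hcover, setLIntegral_univ]

lemma volume_annulus_le (n : ℕ) (k : ℤ) :
    volume (annulus n k) ≤ volume (Metric.ball (0 : Euc n) 1) * 2 ^ ((k : ℝ) * n) := by
  have hball : annulus n k ⊆ Metric.ball 0 ((2 : ℝ) ^ k) := fun x hx => by simpa using hx.2
  refine (measure_mono hball).trans_eq ?_
  rw [Measure.addHaar_ball_of_pos _ _ (by positivity), mul_comm, ← ofReal_two_rpow,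
    finrank_euclideanSpace, Fintype.card_fin, Real.rpow_mul zero_le_two, Real.rpow_natCast,
    Real.rpow_intCast]

/-- The Herz norm `K̇^s_{q,∞}` of an `ℝ≥0∞`-valued function, with `0 < q < ∞` a real number. -/
def herzSupNorm (n : ℕ) (s q : ℝ) (g : Euc n → ℝ≥0∞) : ℝ≥0∞ :=
  ⨆ k : ℤ, 2 ^ ((k : ℝ) * s) * eLpNorm' g q (volume.restrict (annulus n k))

section HerzSupNorm

variable {n : ℕ} {s q : ℝ}

lemma herzSupNorm_le_iff {g : Euc n → ℝ≥0∞} {N : ℝ≥0∞} :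
    herzSupNorm n s q g ≤ N ↔
      ∀ k : ℤ, eLpNorm' g q (volume.restrict (annulus n k)) ≤ N * 2 ^ (-((k : ℝ) * s)) := by
  refine iSup_le_iff.trans (forall_congr' fun k => ?_)
  rw [ENNReal.rpow_neg, ← div_eq_mul_inv, ENNReal.le_div_iff_mul_le (by simp)
    (.inl (two_rpow_ne_top _)), mul_comm]

lemma eLpNorm'_annulus_le (g : Euc n → ℝ≥0∞) (k : ℤ) :
    eLpNorm' g q (volume.restrict (annulus n k)) ≤
      herzSupNorm n s q g * 2 ^ (-((k : ℝ) * s)) :=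
  herzSupNorm_le_iff.1 le_rfl k

lemma lintegral_annulus_le {g : Euc n → ℝ≥0∞} (hg : Measurable g) (hq : 1 ≤ q) (k : ℤ) :
    ∫⁻ x in annulus n k, g x ≤ volume (Metric.ball (0 : Euc n) 1) ^ (1 - 1 / q) *
      2 ^ ((k : ℝ) * (n - n / q - s)) * herzSupNorm n s q g := by
  have hq' : 0 ≤ 1 - 1 / q := sub_nonneg.2 ((div_le_one (by linarith)).2 hq)
  calc ∫⁻ x in annulus n k, g x = eLpNorm' g 1 (volume.restrict (annulus n k)) := by simp [eLpNorm']
    _ ≤ eLpNorm' g q (volume.restrict (annulus n k)) * volume (annulus n k) ^ (1 - 1 / q) := by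
        simpa using eLpNorm'_le_eLpNorm'_mul_rpow_measure_univ zero_lt_one hq
          (μ := volume.restrict (annulus n k)) hg.aestronglyMeasurable
    _ ≤ herzSupNorm n s q g * 2 ^ (-((k : ℝ) * s)) *
          (volume (Metric.ball (0 : Euc n) 1) * 2 ^ ((k : ℝ) * n)) ^ (1 - 1 / q) := by
        gcongr
        exacts [eLpNorm'_annulus_le g k, volume_annulus_le n k]
    _ = volume (Metric.ball (0 : Euc n) 1) ^ (1 - 1 / q) *
          (2 ^ (-((k : ℝ) * s)) * 2 ^ ((k : ℝ) * n * (1 - 1 / q))) * herzSupNorm n s q g := by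
        rw [ENNReal.mul_rpow_of_nonneg _ _ hq', ← ENNReal.rpow_mul]
        ring
    _ = volume (Metric.ball (0 : Euc n) 1) ^ (1 - 1 / q) *
          2 ^ ((k : ℝ) * (n - n / q - s)) * herzSupNorm n s q g := by
        rw [two_rpow_mul_two_rpow]
        ring_nf

lemma herzSupNorm_mono_ae (hq : 0 ≤ q) {g g' : Euc n → ℝ≥0∞} (h : ∀ᵐ x, g x ≤ g' x) :
    herzSupNorm n s q g ≤ herzSupNorm n s q g' := by
  refine iSup_mono fun k => ?_
  gcongr
  exact eLpNorm'_mono_enorm_ae hq (ae_restrict_of_ae (by simpa using h))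

lemma herzSupNorm_add_le (hq : 1 ≤ q) {g g' : Euc n → ℝ≥0∞} (hg : Measurable g)
    (hg' : Measurable g') :
    herzSupNorm n s q (fun x => g x + g' x) ≤ herzSupNorm n s q g + herzSupNorm n s q g' := by
  refine herzSupNorm_le_iff.2 fun k => ?_
  rw [add_mul]
  exact (eLpNorm'_add_le hg.aestronglyMeasurable hg'.aestronglyMeasurable hq).trans
    (add_le_add (eLpNorm'_annulus_le g k) (eLpNorm'_annulus_le g' k))

lemma herzSupNorm_const_mul (hq : 0 < q) (c : ℝ≥0∞) {g : Euc n → ℝ≥0∞} (hg : Measurable g) :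
    herzSupNorm n s q (fun x => c * g x) = c * herzSupNorm n s q g := by
  simp only [herzSupNorm, ENNReal.mul_iSup, eLpNorm'_const_mul_ennreal c hg hq]
  exact iSup_congr fun k => mul_left_comm _ _ _

lemma ae_eq_zero_of_herzSupNorm_eq_zero [NeZero n] (hq : 0 < q) {g : Euc n → ℝ≥0∞}
    (hg : Measurable g) (h : herzSupNorm n s q g = 0) : g =ᵐ[volume] 0 := by
  have hpow : ∫⁻ x, g x ^ q = 0 := by
    rw [lintegral_eq_tsum_annulus, ENNReal.tsum_eq_zero]
    intro k
    have hk : eLpNorm' g q (volume.restrict (annulus n k)) = 0 := by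
      simpa [h] using eLpNorm'_annulus_le (s := s) (q := q) g k
    rw [← eLpNorm'_rpow hq, hk, ENNReal.zero_rpow_of_pos hq]
  filter_upwards [(lintegral_eq_zero_iff (hg.pow_const q)).1 hpow] with x hx
  exact (ENNReal.rpow_eq_zero_iff_of_pos hq).1 hx

lemma herzSupNorm_enorm_le_herzNorm {p r : ℝ≥0∞} (hp : p ≠ 0) (hp' : p ≠ ⊤) (hr : r ≠ 0)
    (f : Euc n → ℝ) : herzSupNorm n s p.toReal (fun x => ‖f x‖ₑ) ≤ herzNorm n s p r f := by
  have hblock (k : ℤ) : 2 ^ ((k : ℝ) * s) *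
        eLpNorm' (fun x => ‖f x‖ₑ) p.toReal (volume.restrict (annulus n k)) =
      ENNReal.ofReal (2 ^ ((k : ℝ) * s)) * eLpNorm ((annulus n k).indicator f) p volume := by
    rw [eLpNorm_indicator_eq_eLpNorm_restrict (measurableSet_annulus n k),
      eLpNorm_eq_eLpNorm' hp hp', eLpNorm'_enorm, ofReal_two_rpow]
  refine iSup_le fun k => ?_
  rw [hblock, herzNorm]
  split_ifs with hr'
  · exact le_iSup (fun k : ℤ => ENNReal.ofReal (2 ^ ((k : ℝ) * s)) *
      eLpNorm ((annulus n k).indicator f) p volume) k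
  · rw [one_div, ENNReal.le_rpow_inv_iff (ENNReal.toReal_pos hr hr')]
    exact ENNReal.le_tsum k

end HerzSupNorm

/-! ### Estimates for the Duhamel operator -/

section Duhamel

variable {n : ℕ} {s' q' s q θ : ℝ}

/-- Exponents for which the Duhamel operator maps `L^∞(K̇^{s'}_{q',∞})` to `L^∞(K̇^s_{q,∞})` with
a gain of `h ^ θ` on time intervals of length `h`. -/
structure DuhamelExponents (n : ℕ) (s' q' s q θ : ℝ) : Prop where
  one_le : 1 ≤ q'
  le : q' ≤ q
  nonneg : 0 ≤ θ
  lt : s < s'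
  pos : 0 < s + n / q
  lt_dim : s' + n / q' < n
  scaling : s' + n / q' - (s + n / q) = 2 - 2 * θ

namespace DuhamelExponents

lemma one_le_right (H : DuhamelExponents n s' q' s q θ) : 1 ≤ q := H.one_le.trans H.le

lemma smoothing_add_eq (H : DuhamelExponents n s' q' s q θ) :
    (n : ℝ) / 2 * (1 / q' - 1 / q) + θ = 1 - (s' - s) / 2 := by
  linear_combination H.scaling / 2

lemma theta_lt_one (H : DuhamelExponents n s' q' s q θ) : θ < 1 := by
  have h : (n : ℝ) / q ≤ n / q' :=
    div_le_div_of_nonneg_left n.cast_nonneg (by linarith [H.one_le]) H.le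
  linarith [H.scaling, H.lt]

lemma one_lt (H : DuhamelExponents n s' q' s q θ) : 1 < (n : ℝ) / 2 + θ := by
  linarith [H.scaling, H.pos, H.lt_dim]

end DuhamelExponents

/-- The `L^q` norm on `A_j` of `e^{τΔ}(χ_{A_k} G)`. -/
def heatBlock (n : ℕ) (q τ : ℝ) (j k : ℤ) (G : Euc n → ℝ≥0∞) : ℝ≥0∞ :=
  eLpNorm' (fun x => ∫⁻ y in annulus n k, eHeatKernel n τ x y * G y) q
    (volume.restrict (annulus n j))

/-- The constant coming from the volumes of `A_j` and `A_k` in the `L¹`–`L^∞` block estimate. -/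
def blockConst (n : ℕ) (q' q : ℝ) : ℝ≥0∞ :=
  volume (Metric.ball (0 : Euc n) 1) ^ (1 / q) * volume (Metric.ball (0 : Euc n) 1) ^ (1 - 1 / q')

lemma blockConst_ne_top (hq' : 1 ≤ q') (hq : 0 ≤ q) : blockConst n q' q ≠ ⊤ :=
  ENNReal.mul_ne_top
    (ENNReal.rpow_ne_top_of_nonneg (by positivity) measure_ball_lt_top.ne)
    (ENNReal.rpow_ne_top_of_nonneg (sub_nonneg.2 ((div_le_one (by linarith)).2 hq'))
      measure_ball_lt_top.ne)

lemma heatBlock_le_of_eHeatKernel_le {G : Euc n → ℝ≥0∞} (hG : Measurable G) (hq' : 1 ≤ q')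
    (hq : 0 < q) {τ : ℝ} {j k : ℤ} {M : ℝ≥0∞}
    (hM : ∀ x ∈ annulus n j, ∀ y ∈ annulus n k, eHeatKernel n τ x y ≤ M) {N : ℝ≥0∞}
    (hN : herzSupNorm n s' q' G ≤ N) :
    heatBlock n q τ j k G ≤
      M * (blockConst n q' q * 2 ^ (j * (n / q) + k * (n - n / q' - s')) * N) := by
  let V : ℝ≥0∞ := volume (Metric.ball (0 : Euc n) 1)
  calc heatBlock n q τ j k G
      ≤ eLpNorm' (fun _ => M * ∫⁻ y in annulus n k, G y) q (volume.restrict (annulus n j)) := by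
        refine eLpNorm'_le_of_le_on hq.le (measurableSet_annulus n j) fun x hx => ?_
        rw [← lintegral_const_mul _ hG]
        refine setLIntegral_mono' (measurableSet_annulus n k) fun y hy => ?_
        gcongr
        exact hM x hx y hy
    _ = M * (∫⁻ y in annulus n k, G y) * volume (annulus n j) ^ (1 / q) := by
        rw [eLpNorm'_const _ hq, enorm_eq_self, Measure.restrict_apply_univ]
    _ ≤ M * (V ^ (1 - 1 / q') * 2 ^ (k * (n - n / q' - s')) * N) *
          (V * 2 ^ ((j : ℝ) * n)) ^ (1 / q) := by
        gcongr
        exacts [(lintegral_annulus_le hG hq' k).trans (by gcongr), volume_annulus_le n j]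
    _ = M * (V ^ (1 / q) * V ^ (1 - 1 / q') *
          (2 ^ ((j : ℝ) * n * (1 / q)) * 2 ^ (k * (n - n / q' - s'))) * N) := by
        rw [ENNReal.mul_rpow_of_nonneg _ _ (by positivity), ← ENNReal.rpow_mul]
        ring
    _ = M * (blockConst n q' q * 2 ^ (j * (n / q) + k * (n - n / q' - s')) * N) := by
        rw [two_rpow_mul_two_rpow, blockConst, show (j : ℝ) * n * (1 / q) = j * (n / q) by ring]

lemma heatBlock_le_rpow_mul {G : Euc n → ℝ≥0∞} (hG : Measurable G) (hq' : 1 ≤ q') (hq : q' ≤ q)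
    {τ : ℝ} (hτ : 0 < τ) (j k : ℤ) {N : ℝ≥0∞} (hN : herzSupNorm n s' q' G ≤ N) :
    heatBlock n q τ j k G ≤ (ENNReal.ofReal τ) ^ (-((n : ℝ) / 2 * (1 / q' - 1 / q))) *
      (2 ^ (-((k : ℝ) * s')) * N) := by
  have hk := measurableSet_annulus n k
  have hind (x : Euc n) : ∫⁻ y in annulus n k, eHeatKernel n τ x y * G y =
      ∫⁻ y, eHeatKernel n τ x y * (annulus n k).indicator G y := by
    simp_rw [← lintegral_indicator hk, ← indicator_mul_right]
  calc heatBlock n q τ j k G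
      ≤ eLpNorm' (fun x => ∫⁻ y, eHeatKernel n τ x y * (annulus n k).indicator G y) q volume := by
        simp only [heatBlock, hind]
        exact eLpNorm'_mono_measure _ Measure.restrict_le_self (by linarith)
    _ ≤ (ENNReal.ofReal τ) ^ (-((n : ℝ) / 2 * (1 / q' - 1 / q))) *
          eLpNorm' ((annulus n k).indicator G) q' volume :=
        eLpNorm'_lintegral_eHeatKernel_mul_le n hτ (hG.indicator hk) hq' hq
    _ ≤ _ := by
        rw [eLpNorm'_indicator_restrict (by linarith) hk, mul_comm (2 ^ _)]
        gcongr
        exact herzSupNorm_le_iff.1 hN k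

lemma zpow_max_sub_two_le_norm_sub {j k : ℤ} (hjk : 2 ≤ |j - k|) {x y : Euc n}
    (hx : x ∈ annulus n j) (hy : y ∈ annulus n k) : (2 : ℝ) ^ (max j k - 2) ≤ ‖x - y‖ := by
  wlog hle : k ≤ j generalizing j k x y
  · rw [max_comm, norm_sub_rev]
    exact this (by rwa [abs_sub_comm]) hy hx (le_of_not_ge hle)
  rw [abs_of_nonneg (sub_nonneg.2 hle)] at hjk
  rw [max_eq_left hle]
  have hk : (2 : ℝ) ^ k ≤ 2 ^ (j - 2) := zpow_le_zpow_right₀ one_le_two (by omega)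
  have hj : (2 : ℝ) ^ (j - 1) = 2 ^ (j - 2) * 2 := by
    rw [← zpow_add_one₀ two_ne_zero]
    congr 1
    ring
  linarith [hx.1, hy.2, norm_sub_norm_le x y]

lemma exists_eHeatKernel_le_of_mem_annulus (n : ℕ) :
    ∃ K ≠ ⊤, ∀ τ : ℝ, 0 < τ → ∀ j k : ℤ, 2 ≤ |j - k| → ∀ x ∈ annulus n j, ∀ y ∈ annulus n k,
      eHeatKernel n τ x y ≤ K * 2 ^ (-(max (j : ℝ) k * n)) := by
  refine ⟨ENNReal.ofReal ((2 * n : ℝ) ^ ((n : ℝ) / 2)) * 2 ^ (2 * n : ℝ),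
    ENNReal.mul_ne_top ENNReal.ofReal_ne_top (two_rpow_ne_top _), fun τ hτ j k hjk x hx y hy => ?_⟩
  refine (eHeatKernel_le_of_le_norm_sub n hτ (by positivity)
    (zpow_max_sub_two_le_norm_sub hjk hx hy)).trans_eq ?_
  rw [← Real.rpow_intCast, ofReal_two_rpow, ← ENNReal.rpow_mul, mul_assoc, two_rpow_mul_two_rpow]
  push_cast
  ring_nf

/-- The time-integrated blocks `e^{τΔ}(χ_{A_k} G(τ))` on `A_j` decay like `2^{-ε|k-j|}`. -/
def HeatBlockBound (n : ℕ) (s' q' s q θ ε : ℝ) (C : ℝ≥0∞) (j k : ℤ) : Prop :=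
  ∀ (h : ℝ) (G : ℝ → Euc n → ℝ≥0∞) (N : ℝ≥0∞), (∀ τ, Measurable (G τ)) →
    (∀ τ ∈ Ioo 0 h, herzSupNorm n s' q' (G τ) ≤ N) →
    ∫⁻ τ in Ioo 0 h, heatBlock n q τ j k (G τ) ≤
      (ENNReal.ofReal h) ^ θ * (C * 2 ^ (-(j * s) - ε * |(k : ℝ) - j|) * N)

lemma HeatBlockBound.mono {ε : ℝ} {C C' : ℝ≥0∞} {j k : ℤ} (hC : C ≤ C')
    (H : HeatBlockBound n s' q' s q θ ε C j k) : HeatBlockBound n s' q' s q θ ε C' j k :=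
  fun h G N hG hN => (H h G N hG hN).trans (by gcongr)

lemma DuhamelExponents.max_mul_add_le (H : DuhamelExponents n s' q' s q θ) {ε : ℝ}
    (hε : ε ≤ s + n / q) (hε' : ε ≤ n - (s' + n / q')) (x y : ℝ) :
    max x y * (2 - 2 * θ - n) + (x * (n / q) + y * (n - n / q' - s')) ≤
      -(x * s) - ε * |y - x| := by
  rw [← H.scaling]
  rcases le_total x y with hle | hle
  · rw [max_eq_right hle, abs_of_nonneg (sub_nonneg.2 hle)]
    linear_combination mul_le_mul_of_nonneg_right hε (sub_nonneg.2 hle)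
  · rw [max_eq_left hle, abs_of_nonpos (sub_nonpos.2 hle)]
    linear_combination mul_le_mul_of_nonneg_right hε' (sub_nonneg.2 hle)

/-- Off the diagonal the kernel is at most `2^{-max(j,k)n}`, and at most `τ^{-n/2}` for large
times; the two are balanced at `τ = 4^{max(j,k)}`. -/
lemma DuhamelExponents.exists_heatBlockBound_of_two_le (H : DuhamelExponents n s' q' s q θ) {ε : ℝ}
    (hε : ε ≤ s + n / q) (hε' : ε ≤ n - (s' + n / q')) :
    ∃ C ≠ ⊤, ∀ j k : ℤ, 2 ≤ |j - k| → HeatBlockBound n s' q' s q θ ε C j k := by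
  obtain ⟨K, hK, hKle⟩ := exists_eHeatKernel_le_of_mem_annulus n
  let c₁ : ℝ≥0∞ := ENNReal.ofReal (1 / (1 - (0 + θ)))
  let c₂ : ℝ≥0∞ := ENNReal.ofReal (1 / (n / 2 + θ - 1))
  let V := blockConst n q' q
  have hq : 0 < q := by linarith [H.one_le_right]
  refine ⟨(K * c₁ + c₂) * V, by finiteness [blockConst_ne_top (n := n) H.one_le hq.le], ?_⟩
  intro j k hjk h G N hG hN
  let m : ℝ := max (j : ℝ) k
  let e : ℝ := j * (n / q) + k * (n - n / q' - s')
  have hblock : ∀ τ ∈ Ioo 0 h, heatBlock n q τ j k (G τ) ≤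
      min (K * 2 ^ (-(m * n)) * (V * 2 ^ e * N) * (ENNReal.ofReal τ) ^ (-0 : ℝ))
        (V * 2 ^ e * N * (ENNReal.ofReal τ) ^ (-((n : ℝ) / 2))) := by
    intro τ hτ
    rw [neg_zero, ENNReal.rpow_zero, mul_one, mul_comm (V * _ * _)]
    exact le_min
      (heatBlock_le_of_eHeatKernel_le (hG τ) H.one_le hq (hKle τ hτ.1 j k hjk) (hN τ hτ))
      (heatBlock_le_of_eHeatKernel_le (hG τ) H.one_le hq
        (fun x _ y _ => eHeatKernel_le_rpow n hτ.1 x y) (hN τ hτ))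
  have he : m * (2 - 2 * θ - n) + e ≤ -(j * s) - ε * |(k : ℝ) - j| := H.max_mul_add_le hε hε' j k
  clear_value e
  calc ∫⁻ τ in Ioo 0 h, heatBlock n q τ j k (G τ)
      ≤ (ENNReal.ofReal h) ^ θ *
          (K * 2 ^ (-(m * n)) * (V * 2 ^ e * N) * (c₁ * 2 ^ (2 * m * (1 - (0 + θ)))) +
            V * 2 ^ e * N * (c₂ * 2 ^ (2 * m * (1 - (n / 2 + θ))))) := by
        simp_rw [← ofReal_two_rpow_rpow]
        exact (setLIntegral_mono' measurableSet_Ioo hblock).trans (lintegral_min_rpow_neg_le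
          H.nonneg (by linarith [H.theta_lt_one]) H.one_lt (by positivity) _ _)
    _ = (ENNReal.ofReal h) ^ θ * ((K * c₁ + c₂) * V * 2 ^ (m * (2 - 2 * θ - n) + e) * N) := by
        have h₁ : (2 : ℝ≥0∞) ^ (m * (2 - 2 * θ - n)) =
            2 ^ (-(m * n)) * 2 ^ (2 * m * (1 - (0 + θ))) := by
          rw [two_rpow_mul_two_rpow]; ring_nf
        have h₂ : 2 * m * (1 - (n / 2 + θ)) = m * (2 - 2 * θ - n) := by ring
        rw [h₂, ← two_rpow_mul_two_rpow _ e, h₁]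
        ring
    _ ≤ _ := by
        gcongr
        exact one_le_two

lemma mul_le_abs_of_abs_le_one {a : ℝ} (ha : |a| ≤ 1) (c : ℝ) : a * c ≤ |c| :=
  (le_abs_self _).trans (abs_mul a c ▸ mul_le_of_le_one_left (abs_nonneg c) ha)

lemma DuhamelExponents.smoothing_exponent_le (H : DuhamelExponents n s' q' s q θ) {ε : ℝ}
    (hε : 0 ≤ ε) {x y : ℝ} (hxy : |y - x| ≤ 1) :
    -(y * s') + 2 * x * (1 - (n / 2 * (1 / q' - 1 / q) + θ)) ≤
      |s'| + |n - n / q' - s'| + ε + (-(x * s) - ε * |y - x|) := by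
  rw [H.smoothing_add_eq]
  linarith [mul_le_abs_of_abs_le_one hxy (-s'), abs_neg s', abs_nonneg (n - n / q' - s'),
    mul_le_of_le_one_right hε hxy]

lemma DuhamelExponents.kernel_exponent_le (H : DuhamelExponents n s' q' s q θ) {ε : ℝ}
    (hε : 0 ≤ ε) {x y : ℝ} (hxy : |y - x| ≤ 1) :
    x * (n / q) + y * (n - n / q' - s') + 2 * x * (1 - (n / 2 + θ)) ≤
      |s'| + |n - n / q' - s'| + ε + (-(x * s) - ε * |y - x|) := by
  have hscale : 2 * (1 - ((n : ℝ) / 2 + θ)) = s' + n / q' - (s + n / q) - n := by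
    rw [H.scaling]
    ring
  rw [mul_assoc 2, mul_left_comm, hscale]
  linarith [mul_le_abs_of_abs_le_one hxy (n - n / q' - s'), abs_nonneg s',
    mul_le_of_le_one_right hε hxy]

/-- Near the diagonal the kernel is at most `τ^{-n/2}`, and the `L^{q'}`–`L^q` smoothing estimate is
used for small times; the two are balanced at `τ = 4^j`. -/
lemma DuhamelExponents.exists_heatBlockBound_of_le_one (H : DuhamelExponents n s' q' s q θ) {ε : ℝ}
    (hε : 0 ≤ ε) :
    ∃ C ≠ ⊤, ∀ j k : ℤ, |j - k| ≤ 1 → HeatBlockBound n s' q' s q θ ε C j k := by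
  let δ : ℝ := n / 2 * (1 / q' - 1 / q)
  let c₁ : ℝ≥0∞ := ENNReal.ofReal (1 / (1 - (δ + θ)))
  let c₂ : ℝ≥0∞ := ENNReal.ofReal (1 / (n / 2 + θ - 1))
  let V := blockConst n q' q
  let M : ℝ := |s'| + |n - n / q' - s'| + ε
  have hq : 0 < q := by linarith [H.one_le_right]
  have hδ : δ + θ = 1 - (s' - s) / 2 := H.smoothing_add_eq
  refine ⟨(c₁ + V * c₂) * 2 ^ M, ENNReal.mul_ne_top
    (by finiteness [blockConst_ne_top (n := n) H.one_le hq.le]) (two_rpow_ne_top M), ?_⟩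
  intro j k hjk h G N hG hN
  let a : ℝ := -((k : ℝ) * s')
  let b : ℝ := j * (n / q) + k * (n - n / q' - s')
  let e : ℝ := -(j * s) - ε * |(k : ℝ) - j|
  have hblock : ∀ τ ∈ Ioo 0 h, heatBlock n q τ j k (G τ) ≤
      min (2 ^ a * N * (ENNReal.ofReal τ) ^ (-δ))
        (V * 2 ^ b * N * (ENNReal.ofReal τ) ^ (-((n : ℝ) / 2))) := by
    intro τ hτ
    rw [mul_comm (_ * N), mul_comm (_ * N)]
    exact le_min (heatBlock_le_rpow_mul (hG τ) H.one_le H.le hτ.1 j k (hN τ hτ))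
      (heatBlock_le_of_eHeatKernel_le (hG τ) H.one_le hq
        (fun x _ y _ => eHeatKernel_le_rpow n hτ.1 x y) (hN τ hτ))
  have hkj : |(k : ℝ) - j| ≤ 1 := by rw [abs_sub_comm]; exact_mod_cast hjk
  have ha : a + 2 * j * (1 - (δ + θ)) ≤ M + e := H.smoothing_exponent_le hε hkj
  have hb : b + 2 * j * (1 - (n / 2 + θ)) ≤ M + e := H.kernel_exponent_le hε hkj
  calc ∫⁻ τ in Ioo 0 h, heatBlock n q τ j k (G τ)
      ≤ (ENNReal.ofReal h) ^ θ * (2 ^ a * N * (c₁ * 2 ^ (2 * j * (1 - (δ + θ)))) +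
          V * 2 ^ b * N * (c₂ * 2 ^ (2 * j * (1 - (n / 2 + θ))))) := by
        simp_rw [← ofReal_two_rpow_rpow]
        exact (setLIntegral_mono' measurableSet_Ioo hblock).trans (lintegral_min_rpow_neg_le
          H.nonneg (by linarith [H.lt]) H.one_lt (by positivity) _ _)
    _ = (ENNReal.ofReal h) ^ θ * ((c₁ * 2 ^ (a + 2 * j * (1 - (δ + θ))) +
          V * c₂ * 2 ^ (b + 2 * j * (1 - (n / 2 + θ)))) * N) := by
        simp only [← two_rpow_mul_two_rpow]
        ring
    _ ≤ (ENNReal.ofReal h) ^ θ * ((c₁ * 2 ^ (M + e) + V * c₂ * 2 ^ (M + e)) * N) := by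
        gcongr <;> exact one_le_two
    _ = (ENNReal.ofReal h) ^ θ * ((c₁ + V * c₂) * 2 ^ M * 2 ^ e * N) := by
        rw [← two_rpow_mul_two_rpow]
        ring

lemma DuhamelExponents.exists_heatBlockBound (H : DuhamelExponents n s' q' s q θ) :
    ∃ ε > 0, ∃ C ≠ ⊤, ∀ j k, HeatBlockBound n s' q' s q θ ε C j k := by
  let ε : ℝ := min (s + n / q) (n - (s' + n / q'))
  have hε : 0 < ε := lt_min H.pos (sub_pos.2 H.lt_dim)
  obtain ⟨C, hC, hfar⟩ := H.exists_heatBlockBound_of_two_le (min_le_left _ _ : ε ≤ _)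
    (min_le_right _ _)
  obtain ⟨C', hC', hnear⟩ := H.exists_heatBlockBound_of_le_one hε.le
  refine ⟨ε, hε, max C C', (max_lt hC.lt_top hC'.lt_top).ne, fun j k => ?_⟩
  rcases le_or_gt |j - k| 1 with h | h
  · exact (hnear j k h).mono (le_max_right _ _)
  · exact (hfar j k h).mono (le_max_left _ _)

/-- The Duhamel integral `∫_{t₀}^t e^{(t-τ)Δ} F(τ) dτ`. -/
def duhamel (n : ℕ) (t₀ t : ℝ) (F : ℝ → Euc n → ℝ≥0∞) (x : Euc n) : ℝ≥0∞ :=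
  ∫⁻ τ in Ioo t₀ t, ∫⁻ y, eHeatKernel n (t - τ) x y * F τ y

lemma measurable_uncurry_eHeatKernel_mul {G : ℝ → Euc n → ℝ≥0∞}
    (hG : Measurable (Function.uncurry G)) :
    Measurable fun z : (Euc n × ℝ) × Euc n => eHeatKernel n z.1.2 z.1.1 z.2 * G z.1.2 z.2 :=
  (measurable_eHeatKernel measurable_fst.snd measurable_fst.fst measurable_snd).mul
    (hG.comp (measurable_fst.snd.prodMk measurable_snd))

lemma measurable_duhamel {F : ℝ → Euc n → ℝ≥0∞} (hF : Measurable (Function.uncurry F)) (t₀ t : ℝ) :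
    Measurable (duhamel n t₀ t F) := by
  have hm : Measurable fun z : (Euc n × ℝ) × Euc n =>
      eHeatKernel n (t - z.1.2) z.1.1 z.2 * F z.1.2 z.2 :=
    (measurable_eHeatKernel (measurable_const.sub measurable_fst.snd) measurable_fst.fst
      measurable_snd).mul (hF.comp (measurable_fst.snd.prodMk measurable_snd))
  exact hm.lintegral_prod_right'.lintegral_prod_right'

lemma duhamel_mono {F G : ℝ → Euc n → ℝ≥0∞} (h : ∀ τ y, F τ y ≤ G τ y) (t₀ t : ℝ) (x : Euc n) :
    duhamel n t₀ t F x ≤ duhamel n t₀ t G x :=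
  lintegral_mono fun τ => lintegral_mono fun y => mul_le_mul_right (h τ y) _

lemma duhamel_add {F G : ℝ → Euc n → ℝ≥0∞} (hF : Measurable (Function.uncurry F))
    (t₀ t : ℝ) (x : Euc n) :
    duhamel n t₀ t (fun τ y => F τ y + G τ y) x = duhamel n t₀ t F x + duhamel n t₀ t G x := by
  have hm : Measurable fun z : ℝ × Euc n => eHeatKernel n (t - z.1) x z.2 * F z.1 z.2 :=
    (measurable_eHeatKernel (measurable_const.sub measurable_fst) measurable_const
      measurable_snd).mul hF
  simp only [duhamel, mul_add]
  rw [← lintegral_add_left hm.lintegral_prod_right']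
  congr with τ
  exact lintegral_add_left (hm.comp measurable_prodMk_left) _

lemma eLpNorm'_lintegral_heat_le_tsum [NeZero n] {G : ℝ → Euc n → ℝ≥0∞}
    (hG : Measurable (Function.uncurry G)) (hq : 1 ≤ q) (h : ℝ) (j : ℤ) :
    eLpNorm' (fun x => ∫⁻ τ in Ioo 0 h, ∫⁻ y, eHeatKernel n τ x y * G τ y) q
        (volume.restrict (annulus n j)) ≤
      ∑' k : ℤ, ∫⁻ τ in Ioo 0 h, heatBlock n q τ j k (G τ) := by
  let b : ℤ → Euc n → ℝ → ℝ≥0∞ := fun k x τ => ∫⁻ y in annulus n k, eHeatKernel n τ x y * G τ y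
  have hb (k : ℤ) : Measurable (Function.uncurry (b k)) :=
    (measurable_uncurry_eHeatKernel_mul hG).lintegral_prod_right'
  calc eLpNorm' (fun x => ∫⁻ τ in Ioo 0 h, ∫⁻ y, eHeatKernel n τ x y * G τ y) q
          (volume.restrict (annulus n j))
      = eLpNorm' (fun x => ∑' k, ∫⁻ τ in Ioo 0 h, b k x τ) q (volume.restrict (annulus n j)) := by
        simp_rw [lintegral_eq_tsum_annulus (n := n)]
        congr with x
        exact lintegral_tsum fun k => ((hb k).comp measurable_prodMk_left).aemeasurable
    _ ≤ ∑' k, eLpNorm' (fun x => ∫⁻ τ in Ioo 0 h, b k x τ) q (volume.restrict (annulus n j)) :=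
        eLpNorm'_tsum_le (fun k => (hb k).lintegral_prod_right') hq
    _ ≤ ∑' k : ℤ, ∫⁻ τ in Ioo 0 h, heatBlock n q τ j k (G τ) :=
        ENNReal.tsum_le_tsum fun k => eLpNorm'_lintegral_le (hb k) hq

lemma DuhamelExponents.exists_herzSupNorm_heat_le [NeZero n] (H : DuhamelExponents n s' q' s q θ) :
    ∃ C ≠ ⊤, ∀ (h : ℝ) (G : ℝ → Euc n → ℝ≥0∞) (N : ℝ≥0∞), Measurable (Function.uncurry G) →
      (∀ τ ∈ Ioo 0 h, herzSupNorm n s' q' (G τ) ≤ N) →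
      herzSupNorm n s q (fun x => ∫⁻ τ in Ioo 0 h, ∫⁻ y, eHeatKernel n τ x y * G τ y) ≤
        C * (ENNReal.ofReal h) ^ θ * N := by
  obtain ⟨ε, hε, C, hC, hblock⟩ := H.exists_heatBlockBound
  refine ⟨C * ∑' i : ℤ, 2 ^ (-(ε * |(i : ℝ)|)),
    ENNReal.mul_ne_top hC (tsum_two_rpow_neg_mul_abs_ne_top hε), fun h G N hG hN => ?_⟩
  refine herzSupNorm_le_iff.2 fun j =>
    (eLpNorm'_lintegral_heat_le_tsum hG H.one_le_right h j).trans ?_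
  calc ∑' k : ℤ, ∫⁻ τ in Ioo 0 h, heatBlock n q τ j k (G τ)
      ≤ ∑' k : ℤ, C * (ENNReal.ofReal h) ^ θ * N * 2 ^ (-((j : ℝ) * s)) *
          2 ^ (-(ε * |(k : ℝ) - j|)) := by
        refine ENNReal.tsum_le_tsum fun k =>
          (hblock j k h G N (fun τ => hG.comp measurable_prodMk_left) hN).trans_eq ?_
        rw [sub_eq_add_neg, ← two_rpow_mul_two_rpow]
        ring
    _ = _ := by
        rw [ENNReal.tsum_mul_left, tsum_two_rpow_neg_mul_abs_sub]
        ring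

/-- The Duhamel operator on time intervals of length `h` is bounded by `C h^θ` from
`L^∞(K̇^{s'}_{q',∞})` to `L^∞(K̇^s_{q,∞})`. -/
def DuhamelBound (n : ℕ) (s' q' s q θ : ℝ) (C : ℝ≥0∞) : Prop :=
  ∀ (t₀ t : ℝ) (F : ℝ → Euc n → ℝ≥0∞) (N : ℝ≥0∞), Measurable (Function.uncurry F) →
    (∀ τ ∈ Ioo t₀ t, herzSupNorm n s' q' (F τ) ≤ N) →
    herzSupNorm n s q (duhamel n t₀ t F) ≤ C * (ENNReal.ofReal (t - t₀)) ^ θ * N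

theorem DuhamelExponents.exists_duhamelBound [NeZero n] (H : DuhamelExponents n s' q' s q θ) :
    ∃ C ≠ ⊤, DuhamelBound n s' q' s q θ C := by
  obtain ⟨C, hC, hbound⟩ := H.exists_herzSupNorm_heat_le
  refine ⟨C, hC, fun t₀ t F N hF hN => ?_⟩
  have hrev (x : Euc n) : duhamel n t₀ t F x =
      ∫⁻ σ in Ioo 0 (t - t₀), ∫⁻ y, eHeatKernel n σ x y * F (t - σ) y := by
    simp [duhamel, ← lintegral_Ioo_sub_left _ t₀ t]
  rw [funext hrev]
  refine hbound (t - t₀) (fun σ => F (t - σ)) N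
    (hF.comp ((measurable_const.sub measurable_fst).prodMk measurable_snd)) fun σ hσ => hN _ ?_
  constructor <;> linarith [hσ.1, hσ.2]

end Duhamel

/-! ### The nonlinearity -/

lemma measurable_ofReal_norm_rpow (n : ℕ) (γ : ℝ) :
    Measurable fun x : Euc n => ENNReal.ofReal (‖x‖ ^ γ) :=
  (measurable_norm.pow_const γ).ennreal_ofReal

lemma ofReal_norm_rpow_le {n : ℕ} (γ : ℝ) {k : ℤ} {x : Euc n} (hx : x ∈ annulus n k) :
    ENNReal.ofReal (‖x‖ ^ γ) ≤ 2 ^ |γ| * 2 ^ ((k : ℝ) * γ) := by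
  have hpow (m : ℤ) : ((2 : ℝ) ^ m) ^ γ = 2 ^ ((m : ℝ) * γ) := by
    rw [← Real.rpow_intCast, ← Real.rpow_mul zero_le_two]
  rw [two_rpow_mul_two_rpow, ← ofReal_two_rpow]
  refine ENNReal.ofReal_le_ofReal ?_
  rcases le_total 0 γ with hγ | hγ
  · refine (Real.rpow_le_rpow (norm_nonneg x) hx.2.le hγ).trans ?_
    rw [hpow]
    exact Real.rpow_le_rpow_of_exponent_le one_le_two (by linarith [abs_nonneg γ])
  · refine (Real.rpow_le_rpow_of_nonpos (by positivity) hx.1 hγ).trans_eq ?_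
    rw [hpow, abs_of_nonpos hγ]
    push_cast
    ring_nf

/-- The weighted product `|x|^γ v^{α-1} w` which controls differences of the nonlinearity. -/
def henonTerm (n : ℕ) (γ α : ℝ) (v w : Euc n → ℝ≥0∞) (x : Euc n) : ℝ≥0∞ :=
  ENNReal.ofReal (‖x‖ ^ γ) * (v x ^ (α - 1) * w x)

lemma measurable_uncurry_henonTerm {n : ℕ} (γ α : ℝ) {v w : ℝ → Euc n → ℝ≥0∞}
    (hv : Measurable (Function.uncurry v)) (hw : Measurable (Function.uncurry w)) :
    Measurable (Function.uncurry fun t => henonTerm n γ α (v t) (w t)) :=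
  ((measurable_ofReal_norm_rpow n γ).comp measurable_snd).mul ((hv.pow_const _).mul hw)

section HenonTerm

variable {n : ℕ} {γ α s q : ℝ} {v w : Euc n → ℝ≥0∞}

lemma measurable_henonTerm (γ α : ℝ) (hv : Measurable v) (hw : Measurable w) :
    Measurable (henonTerm n γ α v w) :=
  (measurable_ofReal_norm_rpow n γ).mul ((hv.pow_const _).mul hw)

lemma herzSupNorm_norm_rpow_mul_le (γ : ℝ) (hq : 0 < q) (hw : Measurable w) :
    herzSupNorm n (s - γ) q (fun x => ENNReal.ofReal (‖x‖ ^ γ) * w x) ≤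
      2 ^ |γ| * herzSupNorm n s q w := by
  refine herzSupNorm_le_iff.2 fun k => ?_
  calc eLpNorm' (fun x => ENNReal.ofReal (‖x‖ ^ γ) * w x) q (volume.restrict (annulus n k))
      ≤ eLpNorm' (fun x => 2 ^ |γ| * 2 ^ ((k : ℝ) * γ) * w x) q
          (volume.restrict (annulus n k)) :=
        eLpNorm'_le_of_le_on hq.le (measurableSet_annulus n k) fun x hx =>
          mul_le_mul_left (ofReal_norm_rpow_le γ hx) _
    _ = 2 ^ |γ| * 2 ^ ((k : ℝ) * γ) * eLpNorm' w q (volume.restrict (annulus n k)) :=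
        eLpNorm'_const_mul_ennreal _ hw hq
    _ ≤ 2 ^ |γ| * 2 ^ ((k : ℝ) * γ) * (herzSupNorm n s q w * 2 ^ (-((k : ℝ) * s))) := by
        gcongr
        exact eLpNorm'_annulus_le w k
    _ = 2 ^ |γ| * herzSupNorm n s q w * (2 ^ ((k : ℝ) * γ) * 2 ^ (-((k : ℝ) * s))) := by ring
    _ = 2 ^ |γ| * herzSupNorm n s q w * 2 ^ (-((k : ℝ) * (s - γ))) := by
        rw [two_rpow_mul_two_rpow]
        ring_nf

lemma herzSupNorm_rpow_mul_le (hα : 1 ≤ α) (hq : 0 < q) (hv : Measurable v) (hw : Measurable w) :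
    herzSupNorm n (α * s) (q / α) (fun x => v x ^ (α - 1) * w x) ≤
      herzSupNorm n s q v ^ (α - 1) * herzSupNorm n s q w := by
  have hα' : 0 ≤ α - 1 := sub_nonneg.2 hα
  refine herzSupNorm_le_iff.2 fun k => (eLpNorm'_rpow_mul_le hv hw hα hq).trans ?_
  calc _ ≤ (herzSupNorm n s q v * 2 ^ (-((k : ℝ) * s))) ^ (α - 1) *
          (herzSupNorm n s q w * 2 ^ (-((k : ℝ) * s))) := by
        gcongr <;> exact eLpNorm'_annulus_le _ k
    _ = herzSupNorm n s q v ^ (α - 1) * herzSupNorm n s q w *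
          (2 ^ (-((k : ℝ) * s) * (α - 1)) * 2 ^ (-((k : ℝ) * s))) := by
        rw [ENNReal.mul_rpow_of_nonneg _ _ hα', ← ENNReal.rpow_mul]
        ring
    _ = _ := by
        rw [two_rpow_mul_two_rpow]
        ring_nf

lemma herzSupNorm_henonTerm_le (γ : ℝ) (hα : 1 ≤ α) (hq : 0 < q) (hv : Measurable v)
    (hw : Measurable w) :
    herzSupNorm n (α * s - γ) (q / α) (henonTerm n γ α v w) ≤
      2 ^ |γ| * (herzSupNorm n s q v ^ (α - 1) * herzSupNorm n s q w) :=
  (herzSupNorm_norm_rpow_mul_le γ (by positivity) ((hv.pow_const _).mul hw)).trans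
    (mul_le_mul_right (herzSupNorm_rpow_mul_le hα hq hv hw) _)

lemma herzSupNorm_henonTerm_le_of_bounded [NeZero n] {η R : ℝ} {M : ℝ≥0∞} (hα : 1 < α)
    (hq : 0 < q) (hη : 0 ≤ γ + η) (hM : ∀ x, v x ≤ M) (hR : ∀ x, R < ‖x‖ → v x = 0)
    (hw : Measurable w) :
    herzSupNorm n (s + η) q (henonTerm n γ α v w) ≤
      ENNReal.ofReal (R ^ (γ + η)) * M ^ (α - 1) * 2 ^ |η| * herzSupNorm n s q w := by
  have hα' : 0 < α - 1 := sub_pos.2 hα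
  have hpointwise : ∀ᵐ x, henonTerm n γ α v w x ≤
      ENNReal.ofReal (R ^ (γ + η)) * M ^ (α - 1) * (ENNReal.ofReal (‖x‖ ^ (-η)) * w x) := by
    filter_upwards [Measure.ae_ne volume 0] with x hx
    rcases lt_or_ge R ‖x‖ with hxR | hxR
    · simp [henonTerm, hR x hxR, hα']
    · have hsplit : ‖x‖ ^ γ = ‖x‖ ^ (γ + η) * ‖x‖ ^ (-η) := by
        rw [← Real.rpow_add (norm_pos_iff.2 hx), add_neg_cancel_right]
      rw [henonTerm, hsplit, ENNReal.ofReal_mul (by positivity), ← mul_assoc, mul_mul_mul_comm,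
        mul_right_comm _ _ (w x), ← mul_assoc, mul_right_comm]
      gcongr
      exact hM x
  calc _ ≤ _ := herzSupNorm_mono_ae hq.le hpointwise
    _ = _ := herzSupNorm_const_mul hq _ ((measurable_ofReal_norm_rpow n _).mul hw)
    _ ≤ _ := by
        rw [mul_assoc _ (2 ^ |η|)]
        gcongr
        simpa using herzSupNorm_norm_rpow_mul_le (s := s) (-η) hq hw

lemma exists_herzSupNorm_henonTerm_le [NeZero n] {η : ℝ} {φ : Euc n → ℝ} (hα : 1 < α)
    (hq : 0 < q) (hη : 0 ≤ γ + η) (hφ : Continuous φ) (hφc : HasCompactSupport φ) :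
    ∃ P ≠ ⊤, ∀ w : Euc n → ℝ≥0∞, Measurable w →
      herzSupNorm n (s + η) q (henonTerm n γ α (fun x => ‖φ x‖ₑ) w) ≤
        P * herzSupNorm n s q w := by
  obtain ⟨M, hM⟩ := hφc.exists_bound_of_continuous hφ
  obtain ⟨R, hR⟩ := hφc.isCompact.isBounded.exists_norm_le
  refine ⟨ENNReal.ofReal (R ^ (γ + η)) * ENNReal.ofReal M ^ (α - 1) * 2 ^ |η|, ?_, fun w hw =>
    herzSupNorm_henonTerm_le_of_bounded hα hq hη (fun x => ?_) (fun x hx => ?_) hw⟩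
  · exact ENNReal.mul_ne_top (ENNReal.mul_ne_top ENNReal.ofReal_ne_top
      (ENNReal.rpow_ne_top_of_nonneg (sub_nonneg.2 hα.le) ENNReal.ofReal_ne_top))
      (two_rpow_ne_top _)
  · rw [← ofReal_norm]
    exact ENNReal.ofReal_le_ofReal (hM x)
  · rw [image_eq_zero_of_notMem_tsupport fun hx' => (hR x hx').not_gt hx, enorm_zero]

end HenonTerm

lemma abs_rpow_mul_sub_le_of_abs_le {α a b : ℝ} (hα : 1 ≤ α) (hab : |b| ≤ |a|) :
    |(|a| ^ (α - 1) * a - |b| ^ (α - 1) * b)| ≤ α * |a| ^ (α - 1) * |a - b| := by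
  have hα₀ : 0 < α := by linarith
  have hpow (x : ℝ) : |x| ^ (α - 1) * |x| = |x| ^ α := by
    rw [← Real.rpow_add_one' (abs_nonneg x) (by linarith), sub_add_cancel]
  have hroot (x e : ℝ) : (|x| ^ α) ^ (e / α) = |x| ^ e := by
    rw [← Real.rpow_mul (abs_nonneg x), mul_div_cancel₀ e hα₀.ne']
  have hmono : |b| ^ (α - 1) ≤ |a| ^ (α - 1) :=
    Real.rpow_le_rpow (abs_nonneg b) hab (by linarith)
  have hyoung : α * (|a| ^ (α - 1) * |b|) ≤ (α - 1) * |a| ^ α + |b| ^ α := by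
    have h := Real.geom_mean_le_arith_mean2_weighted (div_nonneg (sub_nonneg.2 hα) hα₀.le)
      (one_div_nonneg.2 hα₀.le) (by positivity : 0 ≤ |a| ^ α) (by positivity : 0 ≤ |b| ^ α)
      (by field_simp; ring)
    rw [hroot, hroot, Real.rpow_one, div_mul_eq_mul_div, div_mul_eq_mul_div, ← add_div,
      le_div_iff₀ hα₀] at h
    linarith
  have hdiff : (|a| ^ (α - 1) - |b| ^ (α - 1)) * |b| ≤
      (α - 1) * |a| ^ (α - 1) * (|a| - |b|) := by
    rw [← hpow, ← hpow] at hyoung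
    linarith
  calc |(|a| ^ (α - 1) * a - |b| ^ (α - 1) * b)|
      = |(|a| ^ (α - 1) * (a - b) + (|a| ^ (α - 1) - |b| ^ (α - 1)) * b)| := by ring_nf
    _ ≤ |a| ^ (α - 1) * |a - b| + (|a| ^ (α - 1) - |b| ^ (α - 1)) * |b| := by
        refine (abs_add_le _ _).trans_eq ?_
        rw [abs_mul, abs_mul, abs_of_nonneg (sub_nonneg.2 hmono),
          abs_of_nonneg (Real.rpow_nonneg (abs_nonneg a) _)]
    _ ≤ |a| ^ (α - 1) * |a - b| + (α - 1) * |a| ^ (α - 1) * |a - b| := by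
        refine add_le_add_right (hdiff.trans ?_) _
        exact mul_le_mul_of_nonneg_left (abs_sub_abs_le_abs_sub a b)
          (mul_nonneg (sub_nonneg.2 hα) (Real.rpow_nonneg (abs_nonneg a) _))
    _ = α * |a| ^ (α - 1) * |a - b| := by ring

lemma abs_rpow_mul_sub_le {α : ℝ} (hα : 1 ≤ α) (a b : ℝ) :
    |(|a| ^ (α - 1) * a - |b| ^ (α - 1) * b)| ≤
      α * (|a| ^ (α - 1) + |b| ^ (α - 1)) * |a - b| := by
  wlog hab : |b| ≤ |a| generalizing a b
  · rw [abs_sub_comm, abs_sub_comm a, add_comm]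
    exact this b a (le_of_not_ge hab)
  refine (abs_rpow_mul_sub_le_of_abs_le hα hab).trans ?_
  gcongr
  exact le_add_of_nonneg_right (by positivity)

lemma enorm_rpow_mul_sub_le {α : ℝ} (hα : 1 ≤ α) (a b : ℝ) :
    ‖|a| ^ (α - 1) * a - |b| ^ (α - 1) * b‖ₑ ≤
      ENNReal.ofReal α * (‖a‖ₑ ^ (α - 1) + ‖b‖ₑ ^ (α - 1)) * ‖a - b‖ₑ := by
  have hα' : 0 ≤ α - 1 := sub_nonneg.2 hα
  simp only [Real.enorm_eq_ofReal_abs, ENNReal.ofReal_rpow_of_nonneg (abs_nonneg _) hα']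
  rw [← ENNReal.ofReal_add (by positivity) (by positivity), ← ENNReal.ofReal_mul (by positivity),
    ← ENNReal.ofReal_mul (by positivity)]
  exact ENNReal.ofReal_le_ofReal (abs_rpow_mul_sub_le hα a b)

lemma add_rpow_le_two_rpow_mul {p : ℝ} (hp : 0 ≤ p) (x y : ℝ≥0∞) :
    (x + y) ^ p ≤ 2 ^ p * (x ^ p + y ^ p) := by
  wlog hxy : x ≤ y generalizing x y
  · rw [add_comm x, add_comm (x ^ p)]
    exact this y x (le_of_not_ge hxy)
  calc (x + y) ^ p ≤ (2 * y) ^ p := by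
        gcongr
        rw [two_mul]
        gcongr
    _ = 2 ^ p * y ^ p := ENNReal.mul_rpow_of_nonneg _ _ hp
    _ ≤ 2 ^ p * (x ^ p + y ^ p) := by
        gcongr
        exact le_add_self

lemma enorm_rpow_le_enorm_sub {p : ℝ} (hp : 0 ≤ p) (a c : ℝ) :
    ‖a‖ₑ ^ p ≤ 2 ^ p * (‖a - c‖ₑ ^ p + ‖c‖ₑ ^ p) := by
  refine le_trans ?_ (add_rpow_le_two_rpow_mul hp _ _)
  gcongr
  simpa using enorm_add_le (a - c) c

lemma enorm_nonlin_sub_le (n : ℕ) (γ : ℝ) {α : ℝ} (hα : 1 ≤ α) (u₁ u₂ : Euc n → ℝ)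
    (x : Euc n) :
    ‖nonlin n γ α u₁ x - nonlin n γ α u₂ x‖ₑ ≤ ENNReal.ofReal α *
      henonTerm n γ α (fun x => ‖u₁ x‖ₑ) (fun x => ‖u₁ x - u₂ x‖ₑ) x + ENNReal.ofReal α *
      henonTerm n γ α (fun x => ‖u₂ x‖ₑ) (fun x => ‖u₁ x - u₂ x‖ₑ) x := by
  have hfactor : nonlin n γ α u₁ x - nonlin n γ α u₂ x =
      ‖x‖ ^ γ * (|u₁ x| ^ (α - 1) * u₁ x - |u₂ x| ^ (α - 1) * u₂ x) := by
    simp only [nonlin]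
    ring
  rw [hfactor, enorm_mul, Real.enorm_of_nonneg (by positivity)]
  refine (mul_le_mul_right (enorm_rpow_mul_sub_le hα _ _) _).trans_eq ?_
  simp only [henonTerm]
  ring

/-- The part of the bound for a difference of nonlinearities which is small near `φ`. -/
def smallPart (n : ℕ) (γ α : ℝ) (u₁ u₂ φ : Euc n → ℝ) (x : Euc n) : ℝ≥0∞ :=
  ENNReal.ofReal α * 2 ^ (α - 1) *
    (henonTerm n γ α (fun x => ‖u₁ x - φ x‖ₑ) (fun x => ‖u₁ x - u₂ x‖ₑ) x +
      henonTerm n γ α (fun x => ‖u₂ x - φ x‖ₑ) (fun x => ‖u₁ x - u₂ x‖ₑ) x)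

/-- The part of the bound for a difference of nonlinearities which is linear with potential
`|x|^γ |φ|^{α-1}`. -/
def boundedPart (n : ℕ) (γ α : ℝ) (u₁ u₂ φ : Euc n → ℝ) (x : Euc n) : ℝ≥0∞ :=
  2 * ENNReal.ofReal α * 2 ^ (α - 1) *
    henonTerm n γ α (fun x => ‖φ x‖ₑ) (fun x => ‖u₁ x - u₂ x‖ₑ) x

lemma enorm_nonlin_sub_le_add (n : ℕ) (γ : ℝ) {α : ℝ} (hα : 1 ≤ α) (u₁ u₂ φ : Euc n → ℝ)
    (x : Euc n) :
    ‖nonlin n γ α u₁ x - nonlin n γ α u₂ x‖ₑ ≤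
      smallPart n γ α u₁ u₂ φ x + boundedPart n γ α u₁ u₂ φ x := by
  refine (enorm_nonlin_sub_le n γ hα u₁ u₂ x).trans ?_
  have hα' : 0 ≤ α - 1 := sub_nonneg.2 hα
  calc _ ≤ ENNReal.ofReal α * (ENNReal.ofReal (‖x‖ ^ γ) *
          ((2 ^ (α - 1) * (‖u₁ x - φ x‖ₑ ^ (α - 1) + ‖φ x‖ₑ ^ (α - 1))) * ‖u₁ x - u₂ x‖ₑ)) +
        ENNReal.ofReal α * (ENNReal.ofReal (‖x‖ ^ γ) *
          ((2 ^ (α - 1) * (‖u₂ x - φ x‖ₑ ^ (α - 1) + ‖φ x‖ₑ ^ (α - 1))) * ‖u₁ x - u₂ x‖ₑ)) := by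
        simp only [henonTerm]
        gcongr <;> exact enorm_rpow_le_enorm_sub hα' _ _
    _ = _ := by
        simp only [smallPart, boundedPart, henonTerm]
        ring

/-! ### Continuity in time and approximation -/

lemma herzSupNorm_enorm_sub_le_add {n : ℕ} {s q : ℝ} (hq : 1 ≤ q) {f g h : Euc n → ℝ}
    (hf : Measurable f) (hg : Measurable g) (hh : Measurable h) :
    herzSupNorm n s q (fun x => ‖f x - h x‖ₑ) ≤
      herzSupNorm n s q (fun x => ‖f x - g x‖ₑ) + herzSupNorm n s q (fun x => ‖g x - h x‖ₑ) := by
  refine le_trans ?_ (herzSupNorm_add_le hq (hf.sub hg).enorm (hg.sub hh).enorm)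
  refine herzSupNorm_mono_ae (by linarith) (.of_forall fun x => ?_)
  simpa using enorm_add_le (f x - g x) (g x - h x)

/-- Continuity of `t ↦ u t` on `I` with respect to the Herz norm with `r = ∞`, as a limit. -/
def HerzSupContinuousOn (n : ℕ) (s q : ℝ) (u : ℝ → Euc n → ℝ) (I : Set ℝ) : Prop :=
  ∀ t₀ ∈ I, Tendsto (fun t => herzSupNorm n s q fun x => ‖u t x - u t₀ x‖ₑ)
    (nhdsWithin t₀ I) (nhds 0)

/-- Membership in the closure of `C_c` with respect to the Herz norm with `r = ∞`. -/
def MemHerzSupClosure (n : ℕ) (s q : ℝ) (f : Euc n → ℝ) : Prop :=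
  ∀ ε : ℝ≥0∞, 0 < ε → ∃ φ : Euc n → ℝ, Continuous φ ∧ HasCompactSupport φ ∧
    herzSupNorm n s q (fun x => ‖f x - φ x‖ₑ) < ε

lemma exists_pos_ofReal_le {ε : ℝ≥0∞} (hε : 0 < ε) : ∃ δ > 0, ENNReal.ofReal δ ≤ ε := by
  obtain ⟨δ, -, hδε⟩ := ENNReal.lt_iff_exists_real_btwn.1 hε
  exact ⟨δ, ENNReal.ofReal_pos.1 hδε.1, hδε.2.le⟩

lemma HerzContinuousOn.herzSupContinuousOn {n : ℕ} {s : ℝ} {p r : ℝ≥0∞} {u : ℝ → Euc n → ℝ}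
    {I : Set ℝ} (hp : p ≠ 0) (hp' : p ≠ ⊤) (hr : r ≠ 0) (h : HerzContinuousOn n s p r u I) :
    HerzSupContinuousOn n s p.toReal u I := by
  intro t₀ ht₀
  refine ENNReal.tendsto_nhds_zero.2 fun ε hε => ?_
  obtain ⟨ε', hε', hle⟩ := exists_pos_ofReal_le hε
  obtain ⟨δ, hδ, hclose⟩ := h t₀ ht₀ ε' hε'
  filter_upwards [self_mem_nhdsWithin, mem_nhdsWithin_of_mem_nhds (Metric.ball_mem_nhds t₀ hδ)]
    with t ht htδ
  exact (herzSupNorm_enorm_le_herzNorm hp hp' hr _).trans ((hclose t ht htδ).le.trans hle)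

lemma MemHerzClosure.memHerzSupClosure {n : ℕ} {s : ℝ} {p r : ℝ≥0∞} {f : Euc n → ℝ}
    (hp : p ≠ 0) (hp' : p ≠ ⊤) (hr : r ≠ 0) (h : MemHerzClosure n s p r f) :
    MemHerzSupClosure n s p.toReal f := by
  intro ε hε
  obtain ⟨ε', hε', hle⟩ := exists_pos_ofReal_le hε
  obtain ⟨φ, hφ, hφc, hclose⟩ := h.2 ε' hε'
  exact ⟨φ, hφ.continuous, hφc,
    (herzSupNorm_enorm_le_herzNorm hp hp' hr _).trans_lt (hclose.trans_le hle)⟩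

section Continuity

variable {n : ℕ} {s q : ℝ} {u u₁ u₂ : ℝ → Euc n → ℝ} {I J : Set ℝ}

lemma HerzSupContinuousOn.mono (h : HerzSupContinuousOn n s q u I) (hJ : J ⊆ I) :
    HerzSupContinuousOn n s q u J :=
  fun t ht => (h t (hJ ht)).mono_left (nhdsWithin_mono t hJ)

lemma HerzSupContinuousOn.eventually_sub_le (hq : 1 ≤ q) (hc : HerzSupContinuousOn n s q u I)
    (hu : ∀ t, Measurable (u t)) {t₀ : ℝ} (ht₀ : t₀ ∈ I) {φ : Euc n → ℝ} (hφ : Measurable φ)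
    {ε : ℝ≥0∞} (hε : herzSupNorm n s q (fun x => ‖u t₀ x - φ x‖ₑ) < ε) :
    ∀ᶠ t in nhdsWithin t₀ I, herzSupNorm n s q (fun x => ‖u t x - φ x‖ₑ) ≤ ε := by
  have hlim := (hc t₀ ht₀).add_const (herzSupNorm n s q fun x => ‖u t₀ x - φ x‖ₑ)
  rw [zero_add] at hlim
  filter_upwards [hlim.eventually_le_const hε] with t ht
  exact (herzSupNorm_enorm_sub_le_add hq (hu t) (hu t₀) hφ).trans ht

lemma herzSupNorm_sub_le_of_mem_closure (hq : 1 ≤ q) (hu₁ : ∀ t, Measurable (u₁ t))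
    (hu₂ : ∀ t, Measurable (u₂ t)) (hc₁ : HerzSupContinuousOn n s q u₁ I)
    (hc₂ : HerzSupContinuousOn n s q u₂ I) (hJ : J ⊆ I) {N : ℝ≥0∞}
    (h : ∀ t ∈ J, herzSupNorm n s q (fun x => ‖u₁ t x - u₂ t x‖ₑ) ≤ N)
    {t : ℝ} (ht : t ∈ I) (htJ : t ∈ closure J) :
    herzSupNorm n s q (fun x => ‖u₁ t x - u₂ t x‖ₑ) ≤ N := by
  have hne : (nhdsWithin t J).NeBot := mem_closure_iff_nhdsWithin_neBot.1 htJ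
  have hmono := nhdsWithin_mono t hJ
  have hlim := ((hc₁ t ht).mono_left hmono).add (((hc₂ t ht).mono_left hmono).add_const N)
  rw [zero_add, zero_add] at hlim
  refine ge_of_tendsto hlim ?_
  filter_upwards [self_mem_nhdsWithin] with τ hτ
  have hfar := (herzSupNorm_enorm_sub_le_add (s := s) hq (hu₂ t) (hu₂ τ) (hu₁ t)).trans
    (add_le_add_right (herzSupNorm_enorm_sub_le_add hq (hu₂ τ) (hu₁ τ) (hu₁ t)) _)
  simp only [enorm_sub_rev (u₂ t _), enorm_sub_rev (u₂ τ _) (u₁ τ _)] at hfar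
  calc _ ≤ _ := hfar
    _ ≤ _ := add_le_add_right (add_le_add_left (h τ hτ) _) _
    _ = _ := by ring

lemma herzSupNorm_sub_le_of_ae (hq : 1 ≤ q) (hu₁ : ∀ t, Measurable (u₁ t))
    (hu₂ : ∀ t, Measurable (u₂ t)) {a b : ℝ} (hab : a < b)
    (hc₁ : HerzSupContinuousOn n s q u₁ (Icc a b)) (hc₂ : HerzSupContinuousOn n s q u₂ (Icc a b))
    {N : ℝ≥0∞}
    (h : ∀ᵐ t, t ∈ Ioo a b → herzSupNorm n s q (fun x => ‖u₁ t x - u₂ t x‖ₑ) ≤ N)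
    {t : ℝ} (ht : t ∈ Icc a b) : herzSupNorm n s q (fun x => ‖u₁ t x - u₂ t x‖ₑ) ≤ N := by
  let good : Set ℝ := {τ | τ ∈ Ioo a b → herzSupNorm n s q (fun x => ‖u₁ τ x - u₂ τ x‖ₑ) ≤ N}
  refine herzSupNorm_sub_le_of_mem_closure (J := Ioo a b ∩ good) hq hu₁ hu₂ hc₁ hc₂
    (inter_subset_left.trans Ioo_subset_Icc_self) (fun τ hτ => hτ.2 hτ.1) ht ?_
  rw [← closure_closure]
  refine closure_mono
    ((Measure.dense_of_ae h : Dense good).open_subset_closure_inter isOpen_Ioo) ?_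
  rwa [closure_Ioo hab.ne]

lemma ae_eq_of_herzSupNorm_sub_eq_zero [NeZero n] (hq : 0 < q) {f g : Euc n → ℝ}
    (hf : Measurable f) (hg : Measurable g)
    (h : herzSupNorm n s q (fun x => ‖f x - g x‖ₑ) = 0) : f =ᵐ[volume] g := by
  filter_upwards [ae_eq_zero_of_herzSupNorm_eq_zero hq (hf.sub hg).enorm h] with x hx
  exact sub_eq_zero.1 (enorm_eq_zero.1 hx)

lemma herzSupNorm_sub_eq_zero_of_ae_eq (hq : 0 < q) {f g : Euc n → ℝ} (h : f =ᵐ[volume] g) :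
    herzSupNorm n s q (fun x => ‖f x - g x‖ₑ) = 0 := by
  have hzero (k : ℤ) :
      eLpNorm' (fun x => ‖f x - g x‖ₑ) q (volume.restrict (annulus n k)) = 0 := by
    refine eLpNorm'_eq_zero_of_ae_zero hq (ae_restrict_of_ae ?_)
    filter_upwards [h] with x hx
    simp [hx]
  simp [herzSupNorm, hzero]

end Continuity

/-! ### Local uniqueness -/

section Duhamel

variable {n : ℕ} {γ α s q θ : ℝ} {u₁ u₂ : ℝ → Euc n → ℝ} {φ : Euc n → ℝ}

lemma measurable_uncurry_enorm_sub (hu₁ : Measurable (Function.uncurry u₁))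
    (hu₂ : Measurable (Function.uncurry u₂)) :
    Measurable (Function.uncurry fun τ x => ‖u₁ τ x - u₂ τ x‖ₑ) :=
  (hu₁.sub hu₂).enorm

lemma measurable_uncurry_smallPart (γ α : ℝ) (hu₁ : Measurable (Function.uncurry u₁))
    (hu₂ : Measurable (Function.uncurry u₂)) (hφ : Measurable φ) :
    Measurable (Function.uncurry fun τ => smallPart n γ α (u₁ τ) (u₂ τ) φ) := by
  have hw := measurable_uncurry_enorm_sub hu₁ hu₂
  have hv {u : ℝ → Euc n → ℝ} (hu : Measurable (Function.uncurry u)) :=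
    measurable_uncurry_henonTerm γ α
      (measurable_uncurry_enorm_sub hu (u₂ := fun _ => φ) (hφ.comp measurable_snd)) hw
  exact ((hv hu₁).add (hv hu₂)).const_mul _

lemma measurable_uncurry_boundedPart (γ α : ℝ) (hu₁ : Measurable (Function.uncurry u₁))
    (hu₂ : Measurable (Function.uncurry u₂)) (hφ : Measurable φ) :
    Measurable (Function.uncurry fun τ => boundedPart n γ α (u₁ τ) (u₂ τ) φ) :=
  (measurable_uncurry_henonTerm γ α (v := fun _ x => ‖φ x‖ₑ) (hφ.comp measurable_snd).enorm
    (measurable_uncurry_enorm_sub hu₁ hu₂)).const_mul _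

lemma herzSupNorm_smallPart_le (γ : ℝ) (hα : 1 ≤ α) (hq : α ≤ q) {f g : Euc n → ℝ}
    (hf : Measurable f) (hg : Measurable g) (hφ : Measurable φ) {E : ℝ≥0∞}
    (hfE : herzSupNorm n s q (fun x => ‖f x - φ x‖ₑ) ≤ E)
    (hgE : herzSupNorm n s q (fun x => ‖g x - φ x‖ₑ) ≤ E) :
    herzSupNorm n (α * s - γ) (q / α) (smallPart n γ α f g φ) ≤
      ENNReal.ofReal α * 2 ^ (α - 1) * (2 * (2 ^ |γ| *
        (E ^ (α - 1) * herzSupNorm n s q (fun x => ‖f x - g x‖ₑ)))) := by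
  have hα₀ : 0 < α := one_pos.trans_le hα
  have hq' : 1 ≤ q / α := (one_le_div hα₀).2 hq
  have hterm {h : Euc n → ℝ} (hh : Measurable h)
      (hE : herzSupNorm n s q (fun x => ‖h x - φ x‖ₑ) ≤ E) :
      herzSupNorm n (α * s - γ) (q / α)
          (henonTerm n γ α (fun x => ‖h x - φ x‖ₑ) (fun x => ‖f x - g x‖ₑ)) ≤
        2 ^ |γ| * (E ^ (α - 1) * herzSupNorm n s q (fun x => ‖f x - g x‖ₑ)) := by
    exact (herzSupNorm_henonTerm_le γ hα (hα₀.trans_le hq) (hh.sub hφ).enorm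
      (hf.sub hg).enorm).trans (mul_le_mul_right
        (mul_le_mul_left (ENNReal.rpow_le_rpow hE (sub_nonneg.2 hα)) _) _)
  have hmeas {h : Euc n → ℝ} (hh : Measurable h) :=
    measurable_henonTerm γ α (hh.sub hφ).enorm (hf.sub hg).enorm
  refine (herzSupNorm_const_mul (one_pos.trans_le hq') _
    ((hmeas hf).add (hmeas hg))).trans_le ?_
  rw [two_mul (2 ^ |γ| * _)]
  gcongr
  exact (herzSupNorm_add_le hq' (hmeas hf) (hmeas hg)).trans
    (add_le_add (hterm hf hfE) (hterm hg hgE))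

lemma exists_herzSupNorm_duhamel_smallPart_le [NeZero n] (hα : 1 ≤ α)
    (H : DuhamelExponents n (α * s - γ) (q / α) s q 0) :
    ∃ A ≠ ⊤, ∀ (t₀ t : ℝ) (u₁ u₂ : ℝ → Euc n → ℝ) (φ : Euc n → ℝ) (E N : ℝ≥0∞),
      Measurable (Function.uncurry u₁) → Measurable (Function.uncurry u₂) → Measurable φ →
      (∀ τ ∈ Ioo t₀ t, herzSupNorm n s q (fun x => ‖u₁ τ x - φ x‖ₑ) ≤ E) →
      (∀ τ ∈ Ioo t₀ t, herzSupNorm n s q (fun x => ‖u₂ τ x - φ x‖ₑ) ≤ E) →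
      (∀ τ ∈ Ioo t₀ t, herzSupNorm n s q (fun x => ‖u₁ τ x - u₂ τ x‖ₑ) ≤ N) →
      herzSupNorm n s q (duhamel n t₀ t fun τ => smallPart n γ α (u₁ τ) (u₂ τ) φ) ≤
        A * E ^ (α - 1) * N := by
  obtain ⟨C, hC, hbound⟩ := H.exists_duhamelBound
  have hq : α ≤ q := (one_le_div (one_pos.trans_le hα)).1 H.one_le
  refine ⟨C * (ENNReal.ofReal α * 2 ^ (α - 1) * (2 * 2 ^ |γ|)), ?_,
    fun t₀ t u₁ u₂ φ E N hu₁ hu₂ hφ hE₁ hE₂ hN => ?_⟩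
  · exact ENNReal.mul_ne_top hC (ENNReal.mul_ne_top
      (ENNReal.mul_ne_top ENNReal.ofReal_ne_top (two_rpow_ne_top _))
      (ENNReal.mul_ne_top ENNReal.ofNat_ne_top (two_rpow_ne_top _)))
  · refine (hbound t₀ t _ (ENNReal.ofReal α * 2 ^ (α - 1) * (2 * (2 ^ |γ| * (E ^ (α - 1) * N))))
      (measurable_uncurry_smallPart γ α hu₁ hu₂ hφ) fun τ hτ => ?_).trans_eq ?_
    · refine (herzSupNorm_smallPart_le γ hα hq hu₁.of_uncurry_left hu₂.of_uncurry_left hφ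
        (hE₁ τ hτ) (hE₂ τ hτ)).trans ?_
      gcongr
      exact hN τ hτ
    · rw [ENNReal.rpow_zero]
      ring

lemma exists_herzSupNorm_duhamel_boundedPart_le [NeZero n] {η : ℝ} (hα : 1 < α) (hη : 0 ≤ γ + η)
    (H : DuhamelExponents n (s + η) q s q θ) (hφ : Continuous φ) (hφc : HasCompactSupport φ) :
    ∃ B ≠ ⊤, ∀ (t₀ t : ℝ) (u₁ u₂ : ℝ → Euc n → ℝ) (N : ℝ≥0∞),
      Measurable (Function.uncurry u₁) → Measurable (Function.uncurry u₂) →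
      (∀ τ ∈ Ioo t₀ t, herzSupNorm n s q (fun x => ‖u₁ τ x - u₂ τ x‖ₑ) ≤ N) →
      herzSupNorm n s q (duhamel n t₀ t fun τ => boundedPart n γ α (u₁ τ) (u₂ τ) φ) ≤
        B * ENNReal.ofReal (t - t₀) ^ θ * N := by
  obtain ⟨C, hC, hbound⟩ := H.exists_duhamelBound
  have hq : 0 < q := one_pos.trans_le H.one_le
  obtain ⟨P, hP, hpot⟩ := exists_herzSupNorm_henonTerm_le (s := s) hα hq hη hφ hφc
  refine ⟨C * (2 * ENNReal.ofReal α * 2 ^ (α - 1) * P), ?_, fun t₀ t u₁ u₂ N hu₁ hu₂ hN => ?_⟩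
  · exact ENNReal.mul_ne_top hC (ENNReal.mul_ne_top (ENNReal.mul_ne_top
      (ENNReal.mul_ne_top ENNReal.ofNat_ne_top ENNReal.ofReal_ne_top) (two_rpow_ne_top _)) hP)
  · refine (hbound t₀ t _ (2 * ENNReal.ofReal α * 2 ^ (α - 1) * (P * N))
      (measurable_uncurry_boundedPart γ α hu₁ hu₂ hφ.measurable) fun τ hτ => ?_).trans_eq (by ring)
    have hw : Measurable fun x => ‖u₁ τ x - u₂ τ x‖ₑ :=
      (hu₁.of_uncurry_left.sub hu₂.of_uncurry_left).enorm
    refine (herzSupNorm_const_mul hq _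
      (measurable_henonTerm γ α hφ.measurable.enorm hw)).trans_le ?_
    gcongr
    refine (hpot _ hw).trans ?_
    gcongr
    exact hN τ hτ

end Duhamel

lemma IsMildSolution.enorm_sub_le_duhamel {n : ℕ} {γ α T t₀ : ℝ} {u₀ : Euc n → ℝ}
    {u₁ u₂ : ℝ → Euc n → ℝ} (h₁ : IsMildSolution n γ α T u₀ u₁)
    (h₂ : IsMildSolution n γ α T u₀ u₂) (ht₀ : 0 ≤ t₀)
    (heq : ∀ τ ∈ Icc 0 t₀, u₁ τ =ᵐ[volume] u₂ τ) :
    ∀ᵐ t ∂volume.restrict (Ioo t₀ T), ∀ᵐ x, ‖u₁ t x - u₂ t x‖ₑ ≤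
      duhamel n t₀ t (fun τ y => ‖nonlin n γ α (u₁ τ) y - nonlin n γ α (u₂ τ) y‖ₑ) x := by
  have hsub : Ioo t₀ T ⊆ Ioo 0 T := Ioo_subset_Ioo_left ht₀
  filter_upwards [ae_restrict_of_ae_restrict_of_subset hsub (Measure.ae_ae_of_ae_prod h₁.2),
    ae_restrict_of_ae_restrict_of_subset hsub (Measure.ae_ae_of_ae_prod h₂.2)] with t ht₁ ht₂
  filter_upwards [ht₁, ht₂] with x ⟨_, hint₁, heq₁⟩ ⟨_, hint₂, heq₂⟩
  let K : ℝ × Euc n → ℝ := fun z => heatKernel n (t - z.1) x z.2 * nonlin n γ α (u₁ z.1) z.2 -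
    heatKernel n (t - z.1) x z.2 * nonlin n γ α (u₂ z.1) z.2
  have hdiff : u₁ t x - u₂ t x = ∫ z, K z ∂(volume.restrict (Ioo 0 t)).prod volume := by
    rw [integral_sub hint₁ hint₂, heq₁, heq₂, add_sub_add_left_eq_sub]
  have hcover : Ioo 0 t ⊆ Icc 0 t₀ ∪ Ioo t₀ t := fun τ hτ =>
    (le_or_gt τ t₀).imp (fun h => ⟨hτ.1.le, h⟩) fun h => ⟨h, hτ.2⟩
  have hpast : ∫⁻ τ in Icc 0 t₀, ∫⁻ y, ‖K (τ, y)‖ₑ = 0 := by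
    refine (setLIntegral_congr_fun measurableSet_Icc fun τ hτ => ?_).trans lintegral_zero
    refine (lintegral_congr_ae ?_).trans lintegral_zero
    filter_upwards [heq τ hτ] with y hy
    simp [K, nonlin, hy]
  calc ‖u₁ t x - u₂ t x‖ₑ
      ≤ ∫⁻ z, ‖K z‖ₑ ∂(volume.restrict (Ioo 0 t)).prod volume :=
        hdiff ▸ enorm_integral_le_lintegral_enorm _
    _ = ∫⁻ τ in Ioo 0 t, ∫⁻ y, ‖K (τ, y)‖ₑ := lintegral_prod _ (hint₁.sub hint₂).1.enorm
    _ ≤ ∫⁻ τ in Ioo t₀ t, ∫⁻ y, ‖K (τ, y)‖ₑ := by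
        refine (lintegral_mono_set hcover).trans ((lintegral_union_le _ _ _).trans_eq ?_)
        rw [hpast, zero_add]
    _ ≤ _ := by
        refine setLIntegral_mono' measurableSet_Ioo fun τ hτ => lintegral_mono fun y => ?_
        simp only [K]
        rw [← mul_sub, enorm_mul, Real.enorm_of_nonneg (heatKernel_nonneg n (sub_pos.2 hτ.2) x y)]
        rfl

section LocalUniqueness

variable {n : ℕ} {γ α s q η θ T t₀ : ℝ} {u₁ u₂ : ℝ → Euc n → ℝ}

lemma exists_herzSupNorm_duhamel_nonlin_sub_le [NeZero n] (hα : 1 < α) (hη : 0 ≤ γ + η)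
    (Hsmall : DuhamelExponents n (α * s - γ) (q / α) s q 0)
    (Hbounded : DuhamelExponents n (s + η) q s q θ) :
    ∃ A ≠ ⊤, ∀ φ : Euc n → ℝ, Continuous φ → HasCompactSupport φ → ∃ B ≠ ⊤,
      ∀ (t₀ t : ℝ) (u₁ u₂ : ℝ → Euc n → ℝ) (E N : ℝ≥0∞),
        Measurable (Function.uncurry u₁) → Measurable (Function.uncurry u₂) →
        (∀ τ ∈ Ioo t₀ t, herzSupNorm n s q (fun x => ‖u₁ τ x - φ x‖ₑ) ≤ E) →
        (∀ τ ∈ Ioo t₀ t, herzSupNorm n s q (fun x => ‖u₂ τ x - φ x‖ₑ) ≤ E) →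
        (∀ τ ∈ Ioo t₀ t, herzSupNorm n s q (fun x => ‖u₁ τ x - u₂ τ x‖ₑ) ≤ N) →
        herzSupNorm n s q (duhamel n t₀ t fun τ x =>
            ‖nonlin n γ α (u₁ τ) x - nonlin n γ α (u₂ τ) x‖ₑ) ≤
          (A * E ^ (α - 1) + B * ENNReal.ofReal (t - t₀) ^ θ) * N := by
  obtain ⟨A, hA, hsmall⟩ := exists_herzSupNorm_duhamel_smallPart_le hα.le Hsmall
  refine ⟨A, hA, fun φ hφ hφc => ?_⟩
  obtain ⟨B, hB, hbounded⟩ :=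
    exists_herzSupNorm_duhamel_boundedPart_le hα hη Hbounded hφ hφc
  refine ⟨B, hB, fun t₀ t u₁ u₂ E N hu₁ hu₂ hE₁ hE₂ hN => ?_⟩
  have hmeas₁ := measurable_uncurry_smallPart γ α hu₁ hu₂ hφ.measurable
  have hmeas₂ := measurable_uncurry_boundedPart γ α hu₁ hu₂ hφ.measurable
  have hq : 1 ≤ q := Hbounded.one_le
  calc _ ≤ herzSupNorm n s q fun x =>
          duhamel n t₀ t (fun τ => smallPart n γ α (u₁ τ) (u₂ τ) φ) x +
            duhamel n t₀ t (fun τ => boundedPart n γ α (u₁ τ) (u₂ τ) φ) x := by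
        refine herzSupNorm_mono_ae (by linarith) (.of_forall fun x => ?_)
        rw [← duhamel_add hmeas₁]
        exact duhamel_mono (fun τ => enorm_nonlin_sub_le_add n γ hα.le (u₁ τ) (u₂ τ) φ) t₀ t x
    _ ≤ _ := herzSupNorm_add_le hq (measurable_duhamel hmeas₁ t₀ t)
        (measurable_duhamel hmeas₂ t₀ t)
    _ ≤ A * E ^ (α - 1) * N + B * ENNReal.ofReal (t - t₀) ^ θ * N :=
        add_le_add (hsmall t₀ t u₁ u₂ φ E N hu₁ hu₂ hφ.measurable hE₁ hE₂ hN)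
          (hbounded t₀ t u₁ u₂ N hu₁ hu₂ hN)
    _ = _ := (add_mul _ _ _).symm

lemma eventually_mul_rpow_le {A c : ℝ≥0∞} {p : ℝ} (hA : A ≠ ⊤) (hp : 0 < p) (hc : 0 < c) :
    ∀ᶠ x in nhds (0 : ℝ≥0∞), A * x ^ p ≤ c := by
  have hlim : Tendsto (fun x : ℝ≥0∞ => A * x ^ p) (nhds 0) (nhds (A * 0 ^ p)) :=
    ENNReal.Tendsto.const_mul (ENNReal.continuous_rpow_const.tendsto 0) (.inr hA)
  rw [ENNReal.zero_rpow_of_pos hp, mul_zero] at hlim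
  exact hlim.eventually_le_const hc

lemma eventually_mul_ofReal_sub_rpow_le (t₀ : ℝ) {B c : ℝ≥0∞} {p : ℝ} (hB : B ≠ ⊤) (hp : 0 < p)
    (hc : 0 < c) : ∀ᶠ t in nhds t₀, B * ENNReal.ofReal (t - t₀) ^ p ≤ c := by
  have hlim : Tendsto (fun t => ENNReal.ofReal (t - t₀)) (nhds t₀) (nhds 0) := by
    have hcont : Continuous fun t => ENNReal.ofReal (t - t₀) :=
      ENNReal.continuous_ofReal.comp (continuous_id.sub continuous_const)
    simpa using hcont.tendsto t₀
  exact hlim.eventually (eventually_mul_rpow_le hB hp hc)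

lemma eq_zero_of_le_half_mul {N : ℝ≥0∞} (hN : N ≠ ⊤) (h : N ≤ 2⁻¹ * N) : N = 0 := by
  by_contra hN₀
  rw [mul_comm, ← div_eq_mul_inv] at h
  exact h.not_gt (ENNReal.half_lt_self hN₀ hN)

lemma HerzSupContinuousOn.exists_approx (hq : 1 ≤ q) (hu₁ : ∀ t, Measurable (u₁ t))
    (hu₂ : ∀ t, Measurable (u₂ t)) {I : Set ℝ} (hc₁ : HerzSupContinuousOn n s q u₁ I)
    (hc₂ : HerzSupContinuousOn n s q u₂ I) (ht₀ : t₀ ∈ I)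
    (hmem : MemHerzSupClosure n s q (u₁ t₀)) (heq : u₁ t₀ =ᵐ[volume] u₂ t₀)
    {ε : ℝ≥0∞} (hε : 0 < ε) :
    ∃ φ : Euc n → ℝ, Continuous φ ∧ HasCompactSupport φ ∧ ∀ᶠ t in nhdsWithin t₀ I,
      herzSupNorm n s q (fun x => ‖u₁ t x - φ x‖ₑ) ≤ ε ∧
      herzSupNorm n s q (fun x => ‖u₂ t x - φ x‖ₑ) ≤ ε := by
  obtain ⟨φ, hφ, hφc, hclose₁⟩ := hmem ε hε
  have hclose₂ : herzSupNorm n s q (fun x => ‖u₂ t₀ x - φ x‖ₑ) < ε := by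
    refine lt_of_le_of_lt (herzSupNorm_mono_ae (by linarith) ?_) hclose₁
    filter_upwards [heq] with x hx
    rw [hx]
  exact ⟨φ, hφ, hφc, (hc₁.eventually_sub_le hq hu₁ ht₀ hφ.measurable hclose₁).and
    (hc₂.eventually_sub_le hq hu₂ ht₀ hφ.measurable hclose₂)⟩

lemma exists_herzSupNorm_duhamel_nonlin_sub_le_half [NeZero n] (hα : 1 < α) (hη : 0 ≤ γ + η)
    (hθ : 0 < θ) (Hsmall : DuhamelExponents n (α * s - γ) (q / α) s q 0)
    (Hbounded : DuhamelExponents n (s + η) q s q θ)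
    (hu₁ : Measurable (Function.uncurry u₁)) (hu₂ : Measurable (Function.uncurry u₂))
    (hc₁ : HerzSupContinuousOn n s q u₁ (Icc t₀ T)) (hc₂ : HerzSupContinuousOn n s q u₂ (Icc t₀ T))
    (hT : t₀ < T) (hmem : MemHerzSupClosure n s q (u₁ t₀)) (heq : u₁ t₀ =ᵐ[volume] u₂ t₀) :
    ∃ t₁ ∈ Ioc t₀ T, ∃ M ≠ ⊤,
      (∀ t ∈ Ioo t₀ t₁, herzSupNorm n s q (fun x => ‖u₁ t x - u₂ t x‖ₑ) ≤ M) ∧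
      ∀ t ∈ Ioo t₀ t₁, ∀ N,
        (∀ τ ∈ Ioo t₀ t, herzSupNorm n s q (fun x => ‖u₁ τ x - u₂ τ x‖ₑ) ≤ N) →
        herzSupNorm n s q (duhamel n t₀ t fun τ x =>
          ‖nonlin n γ α (u₁ τ) x - nonlin n γ α (u₂ τ) x‖ₑ) ≤ 2⁻¹ * N := by
  obtain ⟨A, hA, hcontr⟩ := exists_herzSupNorm_duhamel_nonlin_sub_le hα hη Hsmall Hbounded
  have hquarter : (0 : ℝ≥0∞) < 2⁻¹ / 2 := ENNReal.div_pos (by simp) (by simp)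
  obtain ⟨ε, ⟨hεA, hε_top⟩, hε⟩ :=
    ((((eventually_mul_rpow_le hA (sub_pos.2 hα) hquarter).and
      (eventually_lt_nhds zero_lt_top)).filter_mono nhdsWithin_le_nhds).and
      (self_mem_nhdsWithin (s := Ioi 0))).exists
  obtain ⟨φ, hφ, hφc, hclose⟩ := hc₁.exists_approx Hbounded.one_le (fun _ => hu₁.of_uncurry_left)
    (fun _ => hu₂.of_uncurry_left) hc₂ (left_mem_Icc.2 hT.le) hmem heq hε
  obtain ⟨B, hB, hcontr⟩ := hcontr φ hφ hφc
  have hgood := hclose.and ((eventually_mul_ofReal_sub_rpow_le t₀ hB hθ hquarter).filter_mono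
    nhdsWithin_le_nhds)
  rw [nhdsWithin_Icc_eq_nhdsGE hT] at hgood
  obtain ⟨t₁, ht₁, hgood⟩ := (mem_nhdsGE_iff_exists_mem_Ioc_Ico_subset hT).1 hgood
  replace hgood (t : ℝ) (ht : t ∈ Ioo t₀ t₁) := hgood (Ioo_subset_Ico_self ht)
  refine ⟨t₁, ht₁, ε + ε, ENNReal.add_ne_top.2 ⟨hε_top.ne, hε_top.ne⟩, fun t ht => ?_,
    fun t ht N hN => ?_⟩
  · refine (herzSupNorm_enorm_sub_le_add Hbounded.one_le hu₁.of_uncurry_left hφ.measurable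
      hu₂.of_uncurry_left).trans (add_le_add (hgood t ht).1.1 ?_)
    simp only [enorm_sub_rev (φ _)]
    exact (hgood t ht).1.2
  · have hsub : Ioo t₀ t ⊆ Ioo t₀ t₁ := Ioo_subset_Ioo_right ht.2.le
    refine (hcontr t₀ t u₁ u₂ ε N hu₁ hu₂ (fun τ hτ => (hgood τ (hsub hτ)).1.1)
      (fun τ hτ => (hgood τ (hsub hτ)).1.2) hN).trans ?_
    gcongr
    exact (add_le_add hεA (hgood t ht).2).trans_eq (ENNReal.add_halves _)

lemma IsMildSolution.exists_forall_Icc_ae_eq [NeZero n] {u₀ : Euc n → ℝ} (hα : 1 < α)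
    (hη : 0 ≤ γ + η) (hθ : 0 < θ) (Hsmall : DuhamelExponents n (α * s - γ) (q / α) s q 0)
    (Hbounded : DuhamelExponents n (s + η) q s q θ)
    (h₁ : IsMildSolution n γ α T u₀ u₁) (h₂ : IsMildSolution n γ α T u₀ u₂)
    (hc₁ : HerzSupContinuousOn n s q u₁ (Icc 0 T)) (hc₂ : HerzSupContinuousOn n s q u₂ (Icc 0 T))
    (ht₀ : t₀ ∈ Ico 0 T) (hmem : MemHerzSupClosure n s q (u₁ t₀))
    (heq : ∀ τ ∈ Icc 0 t₀, u₁ τ =ᵐ[volume] u₂ τ) :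
    ∃ t₁ ∈ Ioc t₀ T, ∀ t ∈ Icc t₀ t₁, u₁ t =ᵐ[volume] u₂ t := by
  have hu₁ (t : ℝ) : Measurable (u₁ t) := h₁.1.of_uncurry_left
  have hu₂ (t : ℝ) : Measurable (u₂ t) := h₂.1.of_uncurry_left
  have hq := Hbounded.one_le
  replace hc₁ := hc₁.mono (Icc_subset_Icc_left ht₀.1)
  replace hc₂ := hc₂.mono (Icc_subset_Icc_left ht₀.1)
  obtain ⟨t₁, ht₁, M, hM, hfinite, hhalf⟩ :=
    exists_herzSupNorm_duhamel_nonlin_sub_le_half hα hη hθ Hsmall Hbounded h₁.1 h₂.1 hc₁ hc₂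
      ht₀.2 hmem (heq t₀ (right_mem_Icc.2 ht₀.1))
  let N : ℝ≥0∞ := ⨆ τ ∈ Ioo t₀ t₁, herzSupNorm n s q fun x => ‖u₁ τ x - u₂ τ x‖ₑ
  have hduhamel : ∀ᵐ t, t ∈ Ioo t₀ t₁ →
      herzSupNorm n s q (fun x => ‖u₁ t x - u₂ t x‖ₑ) ≤ 2⁻¹ * N := by
    refine (ae_restrict_iff' measurableSet_Ioo).1 ?_
    filter_upwards [ae_restrict_of_ae_restrict_of_subset (Ioo_subset_Ioo_right ht₁.2)
      (h₁.enorm_sub_le_duhamel h₂ ht₀.1 heq), ae_restrict_mem measurableSet_Ioo] with t hle ht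
    refine (herzSupNorm_mono_ae (by linarith) hle).trans (hhalf t ht N fun τ hτ => ?_)
    exact le_iSup₂_of_le τ (Ioo_subset_Ioo_right ht.2.le hτ) le_rfl
  have hle (t : ℝ) (ht : t ∈ Icc t₀ t₁) :
      herzSupNorm n s q (fun x => ‖u₁ t x - u₂ t x‖ₑ) ≤ 2⁻¹ * N :=
    herzSupNorm_sub_le_of_ae hq hu₁ hu₂ ht₁.1 (hc₁.mono (Icc_subset_Icc_right ht₁.2))
      (hc₂.mono (Icc_subset_Icc_right ht₁.2)) hduhamel ht
  have hN : N = 0 := eq_zero_of_le_half_mul (ne_top_of_le_ne_top hM (iSup₂_le hfinite))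
    (iSup₂_le fun τ hτ => hle τ (Ioo_subset_Icc_self hτ))
  refine ⟨t₁, ht₁, fun t ht => ae_eq_of_herzSupNorm_sub_eq_zero (s := s) (one_pos.trans_le hq)
    (hu₁ t) (hu₂ t) (nonpos_iff_eq_zero.1 ?_)⟩
  simpa [hN] using hle t ht

end LocalUniqueness

/-! ### Unconditional uniqueness -/

section Uniqueness

variable {n : ℕ} {γ α s q η θ T : ℝ} {u₁ u₂ : ℝ → Euc n → ℝ}

lemma HerzSupContinuousOn.isClosed_setOf_ae_eq [NeZero n] (hq : 1 ≤ q)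
    (hu₁ : ∀ t, Measurable (u₁ t)) (hu₂ : ∀ t, Measurable (u₂ t)) {I : Set ℝ} (hI : IsClosed I)
    (hc₁ : HerzSupContinuousOn n s q u₁ I) (hc₂ : HerzSupContinuousOn n s q u₂ I) :
    IsClosed ({t | u₁ t =ᵐ[volume] u₂ t} ∩ I) := by
  have hq₀ : 0 < q := one_pos.trans_le hq
  refine isClosed_of_closure_subset fun t ht => ?_
  have htI : t ∈ I := closure_minimal inter_subset_right hI ht
  refine ⟨ae_eq_of_herzSupNorm_sub_eq_zero (s := s) hq₀ (hu₁ t) (hu₂ t)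
    (nonpos_iff_eq_zero.1 ?_), htI⟩
  exact herzSupNorm_sub_le_of_mem_closure hq hu₁ hu₂ hc₁ hc₂ inter_subset_right
    (fun τ hτ => (herzSupNorm_sub_eq_zero_of_ae_eq hq₀ hτ.1).le) htI ht

theorem IsMildSolution.forall_Icc_ae_eq [NeZero n] {u₀ : Euc n → ℝ} (hα : 1 < α)
    (hη : 0 ≤ γ + η) (hθ : 0 < θ) (Hsmall : DuhamelExponents n (α * s - γ) (q / α) s q 0)
    (Hbounded : DuhamelExponents n (s + η) q s q θ)
    (h₁ : IsMildSolution n γ α T u₀ u₁) (h₂ : IsMildSolution n γ α T u₀ u₂)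
    (hc₁ : HerzSupContinuousOn n s q u₁ (Icc 0 T)) (hc₂ : HerzSupContinuousOn n s q u₂ (Icc 0 T))
    (hmem : ∀ t ∈ Icc 0 T, MemHerzSupClosure n s q (u₁ t)) (hinit : u₁ 0 =ᵐ[volume] u₂ 0) :
    ∀ t ∈ Icc 0 T, u₁ t =ᵐ[volume] u₂ t := by
  have hclosed := hc₁.isClosed_setOf_ae_eq Hbounded.one_le (fun _ => h₁.1.of_uncurry_left)
    (fun _ => h₂.1.of_uncurry_left) isClosed_Icc hc₂
  refine hclosed.Icc_subset_of_forall_mem_nhdsGT_of_Icc_subset hinit fun t₀ ht₀ heq => ?_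
  obtain ⟨t₁, ht₁, hlocal⟩ := h₁.exists_forall_Icc_ae_eq hα hη hθ Hsmall Hbounded h₂ hc₁ hc₂ ht₀
    (hmem t₀ (Ico_subset_Icc_self ht₀)) heq
  filter_upwards [Ioc_mem_nhdsGT ht₁.1] with t ht
  exact hlocal t (Ioc_subset_Icc_self ht)

lemma duhamelExponents_smallPart (hα : 1 < α) (hγ : -2 < γ) (hs : γ / (α - 1) < s) (hq : α ≤ q)
    (hcrit : (s + n / q) * (α - 1) = 2 + γ) (hlt : (s + n / q) * α < n + γ) :
    DuhamelExponents n (α * s - γ) (q / α) s q 0 where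
  one_le := (one_le_div (by linarith)).2 hq
  le := div_le_self (by linarith) hα.le
  nonneg := le_rfl
  lt := by linarith [(div_lt_iff₀ (sub_pos.2 hα)).1 hs]
  pos := pos_of_mul_pos_left (by linarith) (sub_pos.2 hα).le
  lt_dim := by
    rw [div_div_eq_mul_div]
    linarith [div_mul_eq_mul_div (n : ℝ) q α]
  scaling := by
    rw [div_div_eq_mul_div]
    linarith [div_mul_eq_mul_div (n : ℝ) q α]

lemma exists_duhamelExponents_boundedPart (hα : 1 < α) (hγ : -2 < γ) (hq : 1 ≤ q)
    (hcrit : (s + n / q) * (α - 1) = 2 + γ) (hlt : (s + n / q) * α < n + γ) :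
    ∃ η θ, 0 ≤ γ + η ∧ 0 < θ ∧ DuhamelExponents n (s + η) q s q θ := by
  have hdim : s + n / q < n - 2 := by linarith
  have hinterval : max 0 (-γ) < min 2 (n - (s + n / q)) :=
    max_lt (lt_min two_pos (by linarith [hdim])) (lt_min (by linarith) (by linarith))
  obtain ⟨η, hη_lower, hη_upper⟩ := exists_between hinterval
  obtain ⟨hη_pos, hη_γ⟩ := max_lt_iff.1 hη_lower
  obtain ⟨hη_two, hη_dim⟩ := lt_min_iff.1 hη_upper
  exact ⟨η, 1 - η / 2, by linarith, by linarith,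
    { one_le := hq
      le := le_rfl
      nonneg := by linarith
      lt := by linarith
      pos := pos_of_mul_pos_left (by linarith) (sub_pos.2 hα).le
      lt_dim := by linarith [hη_dim]
      scaling := by ring }⟩

lemma scaling_of_div_dim_eq {S : ℝ} [NeZero n] (hα : 1 < α)
    (hcrit : S / n = (2 + γ) / (n * (α - 1)))
    (hlt : (2 + γ) / (n * (α - 1)) < (n + γ) / (n * α)) :
    S * (α - 1) = 2 + γ ∧ S * α < n + γ := by
  have hn : (0 : ℝ) < n := Nat.cast_pos.2 (NeZero.pos n)
  rw [← hcrit, ← div_div, div_right_comm, div_lt_div_iff_of_pos_right hn,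
    lt_div_iff₀ (by linarith)] at hlt
  rw [← div_div, div_right_comm, div_left_inj' hn.ne', eq_div_iff (sub_pos.2 hα).ne'] at hcrit
  exact ⟨hcrit, hlt⟩

end Uniqueness

theorem uniqueness_scale_critical_general {n : ℕ} {γ α s T : ℝ} {q r : ℝ≥0∞} (hγ : -2 < γ)
    (hα : 1 < α) (hs : γ / (α - 1) < s) (hq : ENNReal.ofReal α ≤ q) (hq' : q < ⊤) (hr : r ≠ 0)
    (hcrit : s / (n : ℝ) + (q⁻¹).toReal = (2 + γ) / ((n : ℝ) * (α - 1)))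
    (hlt : (2 + γ) / ((n : ℝ) * (α - 1)) < ((n : ℝ) + γ) / ((n : ℝ) * α))
    {u₀ : Euc n → ℝ} {u₁ u₂ : ℝ → Euc n → ℝ}
    (h₁ : IsMildSolution n γ α T u₀ u₁) (h₂ : IsMildSolution n γ α T u₀ u₂)
    (hinit : u₁ 0 =ᵐ[volume] u₂ 0)
    (hmem : ∀ t ∈ Icc (0 : ℝ) T, MemHerzClosure n s q r (u₁ t))
    (hc₁ : HerzContinuousOn n s q r u₁ (Icc 0 T)) (hc₂ : HerzContinuousOn n s q r u₂ (Icc 0 T)) :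
    ∀ t ∈ Icc (0 : ℝ) T, u₁ t =ᵐ[volume] u₂ t := by
  have : NeZero n := ⟨by rintro rfl; simp at hlt⟩
  have hn : (n : ℝ) ≠ 0 := Nat.cast_ne_zero.2 (NeZero.ne n)
  have hαq : α ≤ q.toReal := (ENNReal.ofReal_le_iff_le_toReal hq'.ne).1 hq
  have hq₀ : q ≠ 0 := ((ENNReal.ofReal_pos.2 (one_pos.trans hα)).trans_le hq).ne'
  have hdiv : s / (n : ℝ) + (q⁻¹).toReal = (s + n / q.toReal) / n := by
    rw [ENNReal.toReal_inv]
    field_simp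
  obtain ⟨hscaling, hdim⟩ := scaling_of_div_dim_eq hα (hdiv.symm.trans hcrit) hlt
  have Hsmall := duhamelExponents_smallPart hα hγ hs hαq hscaling hdim
  obtain ⟨η, θ, hη, hθ, Hbounded⟩ :=
    exists_duhamelExponents_boundedPart hα hγ (hα.le.trans hαq) hscaling hdim
  exact h₁.forall_Icc_ae_eq hα hη hθ Hsmall Hbounded h₂
    (hc₁.herzSupContinuousOn hq₀ hq'.ne hr) (hc₂.herzSupContinuousOn hq₀ hq'.ne hr)
    (fun t ht => (hmem t ht).memHerzSupClosure hq₀ hq'.ne hr) hinit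

/-- Unconditional uniqueness for the Hardy–Hénon equation in the scale-critical case
`s/n + 1/q = 1/q_c < 1/Q_c`, `q < ∞`, `r = ∞`, for continuous-in-time solutions with
values in the closure `𝒦̇^s_{q,∞}` of `C_c^∞` in the Herz space. -/
theorem uniqueness_scale_critical
    (n : ℕ) (hn : 3 ≤ n) (γ α s T : ℝ) (q : ℝ≥0∞)
    (hγ : -(min 2 (n : ℝ)) < γ) (hα : 1 < α)
    (hα' : max 1 (1 + γ / (n : ℝ)) ≤ α)
    (hs1 : γ / (α - 1) < s) (hs2 : s ≤ (n : ℝ))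
    (hq : ENNReal.ofReal α ≤ q) (hq' : q < ⊤)
    (hpos : 0 < s / (n : ℝ) + (q⁻¹).toReal)
    (hwd2 : s / (n : ℝ) + (q⁻¹).toReal < 1 ∨
      (s / (n : ℝ) + (q⁻¹).toReal = 1 ∧ (⊤ : ℝ≥0∞) ≤ 1))
    (hcrit : s / (n : ℝ) + (q⁻¹).toReal = (2 + γ) / ((n : ℝ) * (α - 1)))
    (hlt : (2 + γ) / ((n : ℝ) * (α - 1)) < ((n : ℝ) + γ) / ((n : ℝ) * α))
    (hT : 0 < T) (u₀ : Euc n → ℝ) (hu₀ : MemHerzClosure n s q ⊤ u₀)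
    (u₁ u₂ : ℝ → Euc n → ℝ)
    (h₁ : IsMildSolution n γ α T u₀ u₁) (h₂ : IsMildSolution n γ α T u₀ u₂)
    (hi₁ : u₁ 0 = u₀) (hi₂ : u₂ 0 = u₀)
    (hm₁ : ∀ t ∈ Set.Icc (0 : ℝ) T, MemHerzClosure n s q ⊤ (u₁ t))
    (hm₂ : ∀ t ∈ Set.Icc (0 : ℝ) T, MemHerzClosure n s q ⊤ (u₂ t))
    (hc₁ : HerzContinuousOn n s q ⊤ u₁ (Set.Icc 0 T))
    (hc₂ : HerzContinuousOn n s q ⊤ u₂ (Set.Icc 0 T)) :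
    ∀ t ∈ Set.Icc (0 : ℝ) T, u₁ t =ᵐ[volume] u₂ t := by
  have hγ' : -2 < γ := (neg_le_neg (min_le_left _ _)).trans_lt hγ
  exact uniqueness_scale_critical_general hγ' hα hs1 hq hq' ENNReal.top_ne_zero hcrit hlt h₁ h₂
    (hi₁.trans hi₂.symm).eventuallyEq hm₁ hc₁ hc₂
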